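/- arXiv:2507.10828 — 7 statements merged into one kernel-verified Lean document; each statement's English description precedes it below -/
import Mathlib

section
/- Let n ≥ 2, d ≥ 1 be integers, let S ⊆ [n]^∞ be a d-maximal set, let w ∈ S, and let ℓ ≥ 0, k ≥ 0, m ≥ 0 be integers with m ≤ k. Let t be a template of weight m that is regular with respect to w. Then, writing S^{(ℓ)}_k = {a ∈ S^{(ℓ)} : dist(a,w) = k}, we have |S^{(ℓ)}_k[t]| ≤ Sun(d+n, 2k−2m), where Sun(p,0) is interpreted as 1. -/
/-- Hamming distance between infinite words over `Fin n`, as an extended natural number. -/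
noncomputable def hDist (n : ℕ) (a b : ℕ → Fin n) : ℕ∞ := {i | a i ≠ b i}.encard

/-- The `r`-ball around `a`. -/
def hBall (n : ℕ) (a : ℕ → Fin n) (r : ℕ) : Set (ℕ → Fin n) := {x | hDist n x a ≤ (r : ℕ∞)}

/-- `S` is `d`-maximal: it has diameter `d` and any point within distance `d`
of all of `S` already belongs to `S`. -/
def IsDMaximal (n d : ℕ) (S : Set (ℕ → Fin n)) : Prop :=
  (∀ a ∈ S, ∀ b ∈ S, hDist n a b ≤ (d : ℕ∞)) ∧
  (∃ a ∈ S, ∃ b ∈ S, hDist n a b = (d : ℕ∞)) ∧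
  (∀ x : ℕ → Fin n, (∀ s ∈ S, hDist n x s ≤ (d : ℕ∞)) → x ∈ S)

/-- `S` contains an `r`-ball. -/
def ContainsBall (n : ℕ) (S : Set (ℕ → Fin n)) (r : ℕ) : Prop :=
  ∃ a, hBall n a r ⊆ S

/-- `S^(ℓ)`: centers of `ℓ`-balls contained in `S` that are not contained in any
`(ℓ+1)`-ball inside `S`. -/
def Sell (n : ℕ) (S : Set (ℕ → Fin n)) (ℓ : ℕ) : Set (ℕ → Fin n) :=
  {a ∈ S | hBall n a ℓ ⊆ S ∧
    ¬ ∃ b, hBall n a ℓ ⊆ hBall n b (ℓ + 1) ∧ hBall n b (ℓ + 1) ⊆ S}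

/-- A word `a` fits the template `t` (entries `none` are wildcards). -/
def Fits (n : ℕ) (a : ℕ → Fin n) (t : ℕ → Option (Fin n)) : Prop :=
  ∀ i x, t i = some x → a i = x

/-- A template is regular with respect to `w` if it never fixes the letter of `w`. -/
def RegularWrt (n : ℕ) (w : ℕ → Fin n) (t : ℕ → Option (Fin n)) : Prop :=
  ∀ i, t i ≠ some (w i)

/-- A family of `p` sets forming a sunflower: `p` distinct sets whose pairwise
intersections are all equal. -/
def IsSunflowerFam (p : ℕ) (F : Finset (Finset ℕ)) : Prop :=
  F.card = p ∧ ∃ C : Finset ℕ, ∀ A ∈ F, ∀ B ∈ F, A ≠ B → A ∩ B = C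

/-- `Sun p k`: the least `N` such that every family of more than `N` distinct
`k`-element sets contains a `p`-sunflower. -/
noncomputable def Sun (p k : ℕ) : ℕ :=
  sInf {N : ℕ | ∀ F : Finset (Finset ℕ), (∀ A ∈ F, A.card = k) → N < F.card →
    ∃ G ⊆ F, IsSunflowerFam p G}


theorem sun_hit (k : ℕ) (F : Finset (Finset ℕ)) (hF : ∀ A ∈ F, A.card = k + 1) (p : ℕ) :
    (∃ G ⊆ F, G.card = p ∧ ∀ A ∈ G, ∀ B ∈ G, A ≠ B → A ∩ B = ∅) ∨
    (∃ U : Finset ℕ, U.card ≤ p * (k + 1) ∧ ∀ A ∈ F, ∃ x ∈ U, x ∈ A) := by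
  induction p with
  | zero => exact Or.inl ⟨∅, by simp, by simp, by simp⟩
  | succ p ih =>
    rcases ih with ⟨G, hGF, hGc, hG⟩ | ⟨U, hU, hUF⟩
    · by_cases h : ∀ A ∈ F, ∃ x ∈ G.biUnion id, x ∈ A
      · right
        refine ⟨G.biUnion id, ?_, h⟩
        have := Finset.card_biUnion_le_card_mul G id (k+1) (fun A hA => (hF A (hGF hA)).le)
        rw [hGc] at this
        nlinarith
      · left
        push Not at h
        obtain ⟨A, hAF, hA⟩ := h
        have hdis : ∀ B ∈ G, A ∩ B = ∅ := by
          intro B hB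
          ext x
          simp only [Finset.mem_inter, Finset.notMem_empty, iff_false, not_and]
          intro hxA hxB
          exact hA x (Finset.mem_biUnion.2 ⟨B, hB, hxB⟩) hxA
        have hAG : A ∉ G := by
          intro hAG
          have h1 := hdis A hAG
          have h2 := hF A hAF
          rw [Finset.inter_self] at h1
          rw [h1] at h2
          simp at h2
        refine ⟨insert A G, ?_, ?_, ?_⟩
        · exact Finset.insert_subset hAF hGF
        · rw [Finset.card_insert_of_notMem hAG, hGc]
        · intro B hB C hC hne
          rcases Finset.mem_insert.1 hB with rfl | hB1
          · rcases Finset.mem_insert.1 hC with rfl | hC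
            · exact absurd rfl hne
            · exact hdis C hC
          · rcases Finset.mem_insert.1 hC with rfl | hC
            · rw [Finset.inter_comm]; exact hdis B hB1
            · exact hG B hB1 C hC hne
    · right
      exact ⟨U, by nlinarith, hUF⟩

theorem sun_exists (p k : ℕ) (hp : 0 < p) : ∃ N : ℕ, ∀ F : Finset (Finset ℕ),
    (∀ A ∈ F, A.card = k) → N < F.card → ∃ G ⊆ F, IsSunflowerFam p G := by
  induction k with
  | zero =>
    refine ⟨1, fun F hF hc => ?_⟩
    exfalso
    obtain ⟨A, hA, B, hB, hne⟩ := Finset.one_lt_card.1 hc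
    have h1 := hF A hA
    have h2 := hF B hB
    rw [Finset.card_eq_zero] at h1 h2
    exact hne (h1.trans h2.symm)
  | succ k ih =>
    obtain ⟨N, hN⟩ := ih
    refine ⟨p * (k+1) * N, fun F hF hc => ?_⟩
    rcases sun_hit k F hF p with ⟨G, hGF, hGc, hG⟩ | ⟨U, hU, hUF⟩
    · exact ⟨G, hGF, hGc, ∅, hG⟩
    · have hx : ∃ x ∈ U, N < (F.filter (fun A => x ∈ A)).card := by
        by_contra hcon
        push Not at hcon
        have h1 : F ⊆ U.biUnion (fun x => F.filter (fun A => x ∈ A)) := by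
          intro A hA
          obtain ⟨x, hxU, hxA⟩ := hUF A hA
          exact Finset.mem_biUnion.2 ⟨x, hxU, Finset.mem_filter.2 ⟨hA, hxA⟩⟩
        have h2 := Finset.card_le_card h1
        have h3 := Finset.card_biUnion_le_card_mul U _ N hcon
        have h4 := Nat.mul_le_mul_right N hU
        omega
      obtain ⟨x, hxU, hx⟩ := hx
      set Fx := F.filter (fun A => x ∈ A) with hFx
      have hinj : Set.InjOn (fun A : Finset ℕ => A.erase x) (Fx : Set (Finset ℕ)) := by
        intro A hA B hB hAB
        have hA' := (Finset.mem_filter.1 (Finset.mem_coe.1 hA)).2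
        have hB' := (Finset.mem_filter.1 (Finset.mem_coe.1 hB)).2
        rw [← Finset.insert_erase hA', ← Finset.insert_erase hB']
        exact congrArg _ hAB
      obtain ⟨G, hGF, hGc, C, hC⟩ := hN (Fx.image (fun A => A.erase x)) (by
        intro A hA
        obtain ⟨B, hB, rfl⟩ := Finset.mem_image.1 hA
        have hB' := Finset.mem_filter.1 hB
        rw [Finset.card_erase_of_mem hB'.2, hF B hB'.1]; rfl) (by
        rw [Finset.card_image_of_injOn hinj]; exact hx)
      have hG' : ∀ A ∈ G, x ∉ A ∧ insert x A ∈ F := by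
        intro A hA
        obtain ⟨B, hB, rfl⟩ := Finset.mem_image.1 (hGF hA)
        have hB' := Finset.mem_filter.1 hB
        refine ⟨by simp, ?_⟩
        rw [Finset.insert_erase hB'.2]
        exact hB'.1
      refine ⟨G.image (fun A => insert x A), ?_, ?_, insert x C, ?_⟩
      · intro A hA
        obtain ⟨B, hB, rfl⟩ := Finset.mem_image.1 hA
        exact (hG' B hB).2
      · rw [Finset.card_image_of_injOn, hGc]
        intro A hA B hB hAB
        rw [← Finset.erase_insert (hG' A hA).1, ← Finset.erase_insert (hG' B hB).1]
        exact congrArg (fun A => Finset.erase A x) hAB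
      · intro A hA B hB hne
        obtain ⟨A', hA', rfl⟩ := Finset.mem_image.1 hA
        obtain ⟨B', hB', rfl⟩ := Finset.mem_image.1 hB
        rw [← Finset.insert_inter_distrib, hC A' hA' B' hB']
        rintro rfl
        exact hne rfl

theorem hDist_tri (n : ℕ) (a b c : ℕ → Fin n) : hDist n a c ≤ hDist n a b + hDist n b c := by
  unfold hDist
  refine le_trans (Set.encard_le_encard ?_) (Set.encard_union_le _ _)
  intro i hi
  by_cases h : a i = b i
  · right
    exact fun h' => hi (h.trans h')
  · left
    exact h

theorem move_away (n ℓ : ℕ) (hn : 2 ≤ n) (a s : ℕ → Fin n) (h : hDist n a s ≠ ⊤) :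
    ∃ y ∈ hBall n a ℓ, hDist n a s + ℓ ≤ hDist n y s := by
  classical
  have hfin : {i | a i ≠ s i}.Finite := Set.encard_ne_top_iff.1 h
  obtain ⟨Q, hQ, hQc⟩ := hfin.infinite_compl.exists_subset_card_eq ℓ
  haveI : Nontrivial (Fin n) := Fin.nontrivial_iff_two_le.2 hn
  choose f hf using fun x : Fin n => exists_ne x
  refine ⟨fun i => if i ∈ Q then f (s i) else a i, ?_, ?_⟩
  · show Set.encard _ ≤ _
    rw [← hQc, ← Set.encard_coe_eq_coe_finsetCard]
    apply Set.encard_le_encard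
    intro i hi
    by_contra hiQ
    have : i ∉ Q := hiQ
    simp [this] at hi
  · unfold hDist
    rw [← hQc, ← Set.encard_coe_eq_coe_finsetCard, ← Set.encard_union_eq]
    · apply Set.encard_le_encard
      rintro i (hi | hi)
      · have hiQ : i ∉ Q := fun h' => hQ h' hi
        simpa [hiQ] using hi
      · have : i ∈ Q := hi
        simp [this, hf]
    · rw [Set.disjoint_left]
      exact fun i hi h' => hQ h' hi

theorem sell_core (n d : ℕ) (hn : 2 ≤ n)
    (S : Set (ℕ → Fin n)) (hmax : IsDMaximal n d S) (ℓ r : ℕ) (hr : 1 ≤ r)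
    (G : Finset (ℕ → Fin n)) (hGc : G.card = d + n) (hG : ∀ a ∈ G, a ∈ Sell n S ℓ)
    (b : ℕ → Fin n) (hb : ∀ a ∈ G, hDist n a b = r)
    (hdis : ∀ a ∈ G, ∀ a' ∈ G, ∀ i, a i ≠ b i → a' i ≠ b i → a = a') : False := by
  classical
  have hball : hBall n b (ℓ + r) ⊆ S := by
    intro x hx
    refine hmax.2.2 x fun s hs => ?_
    have hpet : ∃ a ∈ G, ∀ i, a i ≠ b i → s i = b i := by
      by_contra hcon
      push Not at hcon
      choose! f hf1 hf2 using hcon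
      obtain ⟨a0, ha0⟩ : G.Nonempty := Finset.card_pos.1 (by omega)
      have h1 : ((G.erase a0).image f : Set ℕ) ⊆ {i | a0 i ≠ s i} := by
        intro i hi
        obtain ⟨a, ha, rfl⟩ := Finset.mem_image.1 (Finset.mem_coe.1 hi)
        have ha' := Finset.mem_erase.1 ha
        have hab : a0 (f a) = b (f a) := by
          by_contra hne
          exact ha'.1 (hdis a ha'.2 a0 ha0 _ (hf1 a ha'.2) hne)
        show a0 (f a) ≠ s (f a)
        rw [hab]
        exact (hf2 a ha'.2).symm
      have h2 := (Set.encard_le_encard h1).trans (hmax.1 a0 (hG a0 ha0).1 s hs)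
      rw [Set.encard_coe_eq_coe_finsetCard, Finset.card_image_of_injOn,
        Finset.card_erase_of_mem ha0, hGc] at h2
      · have h3 : d + n - 1 ≤ d := by exact_mod_cast h2
        omega
      · intro a ha a' ha' haa
        have ha := Finset.mem_of_mem_erase (Finset.mem_coe.1 ha)
        have ha' := Finset.mem_of_mem_erase (Finset.mem_coe.1 ha')
        refine hdis a ha a' ha' (f a) (hf1 a ha) ?_
        have := hf1 a' ha'
        rwa [← haa] at this
    obtain ⟨a, ha, hpa⟩ := hpet
    have has := hmax.1 a (hG a ha).1 s hs
    obtain ⟨y, hy, hys⟩ := move_away n ℓ hn a s (ne_top_of_le_ne_top (by simp) has)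
    have hyd := hmax.1 y ((hG a ha).2.1 hy) s hs
    have hadd : hDist n a b + hDist n b s ≤ hDist n a s := by
      unfold hDist
      rw [← Set.encard_union_eq]
      · apply Set.encard_le_encard
        rintro i (hi | hi)
        · show a i ≠ s i
          rw [hpa i hi]; exact hi
        · show a i ≠ s i
          by_cases h : a i = b i
          · rw [h]; exact hi
          · exact absurd (hpa i h).symm hi
      · rw [Set.disjoint_left]
        exact fun i hi h' => h' (hpa i hi).symm
    rw [hb a ha] at hadd
    have hx' : hDist n x b ≤ ((ℓ + r : ℕ) : ℕ∞) := hx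
    calc hDist n x s ≤ hDist n x b + hDist n b s := hDist_tri ..
      _ ≤ ((ℓ + r : ℕ) : ℕ∞) + hDist n b s := by gcongr
      _ = (r + hDist n b s) + ℓ := by push_cast; ring
      _ ≤ hDist n a s + ℓ := by gcongr
      _ ≤ d := hys.trans hyd
  obtain ⟨a, ha⟩ : G.Nonempty := Finset.card_pos.1 (by omega)
  have hab := hb a ha
  have hne : ∃ i, a i ≠ b i := by
    by_contra hcon
    push Not at hcon
    have : a = b := funext hcon
    subst this
    have h0 : hDist n a a = 0 := by simp [hDist]
    rw [h0] at hab
    have h1 : 0 = r := by exact_mod_cast hab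
    omega
  obtain ⟨i, hi⟩ := hne
  have h1 : hDist n a (Function.update a i (b i)) ≤ 1 := by
    unfold hDist
    rw [← Set.encard_singleton i]
    apply Set.encard_le_encard
    intro j hj
    by_contra hji
    have : j ≠ i := hji
    simp [this] at hj
  have h2 : hDist n (Function.update a i (b i)) b + 1 ≤ r := by
    rw [← hab]
    unfold hDist
    rw [← Set.encard_singleton i, ← Set.encard_union_eq]
    · apply Set.encard_le_encard
      rintro j (hj | hj)
      · by_cases hji : j = i
        · subst hji; exact hi
        · simpa [hji] using hj
      · rw [Set.mem_singleton_iff.1 hj]; exact hi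
    · rw [Set.disjoint_singleton_right]
      simp
  refine (hG a ha).2.2 ⟨Function.update a i (b i), ?_, ?_⟩
  · intro x hx
    have hx' : hDist n x a ≤ ℓ := hx
    show hDist n x _ ≤ ((ℓ + 1 : ℕ) : ℕ∞)
    push_cast
    exact (hDist_tri n x a _).trans (add_le_add hx' h1)
  · intro x hx
    apply hball
    have hx' : hDist n x _ ≤ ((ℓ + 1 : ℕ) : ℕ∞) := hx
    show hDist n x b ≤ ((ℓ + r : ℕ) : ℕ∞)
    calc hDist n x b ≤ _ := hDist_tri n x (Function.update a i (b i)) b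
      _ ≤ ((ℓ + 1 : ℕ) : ℕ∞) + hDist n (Function.update a i (b i)) b := by gcongr
      _ = ℓ + (hDist n (Function.update a i (b i)) b + 1) := by push_cast; ring
      _ ≤ ℓ + r := by gcongr
      _ = _ := by push_cast; rfl

/-- encoding of a word -/
noncomputable def encW (n : ℕ) (a : ℕ → Fin n) (D : Finset ℕ) : Finset ℕ :=
  D.image (fun i => Encodable.encode (Sum.inl i : ℕ ⊕ (ℕ × Fin n))) ∪
  D.image (fun i => Encodable.encode (Sum.inr (i, a i) : ℕ ⊕ (ℕ × Fin n)))

theorem encW_inl (n : ℕ) (a : ℕ → Fin n) (D : Finset ℕ) (i : ℕ) :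
    Encodable.encode (Sum.inl i : ℕ ⊕ (ℕ × Fin n)) ∈ encW n a D ↔ i ∈ D := by
  simp only [encW, Finset.mem_union, Finset.mem_image, Encodable.encode_inj]
  simp

theorem encW_inr (n : ℕ) (a : ℕ → Fin n) (D : Finset ℕ) (i : ℕ) (x : Fin n) :
    Encodable.encode (Sum.inr (i, x) : ℕ ⊕ (ℕ × Fin n)) ∈ encW n a D ↔ i ∈ D ∧ a i = x := by
  simp only [encW, Finset.mem_union, Finset.mem_image, Encodable.encode_inj]
  simp only [reduceCtorEq, and_false, exists_false, Sum.inr.injEq, Prod.mk.injEq, false_or]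
  constructor
  · rintro ⟨j, hj, rfl, rfl⟩; exact ⟨hj, rfl⟩
  · rintro ⟨hj, rfl⟩; exact ⟨i, hj, rfl, rfl⟩

theorem encW_card (n : ℕ) (a : ℕ → Fin n) (D : Finset ℕ) : (encW n a D).card = 2 * D.card := by
  unfold encW
  rw [Finset.card_union_of_disjoint, Finset.card_image_of_injective, Finset.card_image_of_injective]
  · ring
  · intro i j h
    simpa using (congrArg (fun x => x) (Encodable.encode_inj.1 h) : _) |> fun h => (by
      simp at h; exact h.1)
  · intro i j h
    have := Encodable.encode_inj.1 h
    simpa using this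
  · rw [Finset.disjoint_left]
    intro x hx hy
    obtain ⟨i, -, rfl⟩ := Finset.mem_image.1 hx
    obtain ⟨j, -, hj⟩ := Finset.mem_image.1 hy
    have := Encodable.encode_inj.1 hj
    simp at this

theorem stmt10 (n d : ℕ) (hn : 2 ≤ n) (hd : 1 ≤ d)
    (S : Set (ℕ → Fin n)) (hmax : IsDMaximal n d S)
    (w : ℕ → Fin n) (hw : w ∈ S)
    (ℓ k m : ℕ) (hmk : m ≤ k)
    (t : ℕ → Option (Fin n)) (htfin : {i | t i ≠ none}.Finite)
    (hwt : {i | t i ≠ none}.ncard = m) (hreg : RegularWrt n w t) :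
    {a ∈ Sell n S ℓ | hDist n a w = (k : ℕ∞) ∧ Fits n a t}.encard ≤
      (Sun (d + n) (2 * k - 2 * m) : ℕ∞) := by
  classical
  set X := {a ∈ Sell n S ℓ | hDist n a w = (k : ℕ∞) ∧ Fits n a t} with hX
  have hsun : ∀ F : Finset (Finset ℕ), (∀ A ∈ F, A.card = 2 * k - 2 * m) →
      Sun (d + n) (2 * k - 2 * m) < F.card → ∃ G ⊆ F, IsSunflowerFam (d + n) G :=
    Nat.sInf_mem (s := {N : ℕ | ∀ F : Finset (Finset ℕ), (∀ A ∈ F, A.card = 2 * k - 2 * m) →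
      N < F.card → ∃ G ⊆ F, IsSunflowerFam (d + n) G}) (sun_exists _ _ (by omega))
  by_contra hcon
  rw [not_le] at hcon
  generalize Sun (d + n) (2 * k - 2 * m) = N at hsun hcon
  -- differing positions outside the template
  have hDex : ∀ a : ℕ → Fin n, ∃ D : Finset ℕ, a ∈ X →
      (D.card = k - m ∧ ∀ i, i ∈ D ↔ a i ≠ w i ∧ t i = none) := by
    intro a
    by_cases ha : a ∈ X
    · have hfin : {i | a i ≠ w i}.Finite := by
        apply Set.encard_ne_top_iff.1
        have : {i | a i ≠ w i}.encard = k := ha.2.1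
        rw [this]; simp
      have hsub : {i | t i ≠ none} ⊆ {i | a i ≠ w i} := by
        intro i hi
        obtain ⟨x, hx⟩ := Option.ne_none_iff_exists'.1 hi
        show a i ≠ w i
        rw [ha.2.2 i x hx]
        rintro rfl
        exact hreg i hx
      refine ⟨(hfin.subset (Set.sdiff_subset (t := {i | t i ≠ none}))).toFinset, fun _ => ⟨?_, ?_⟩⟩
      · rw [← Set.ncard_eq_toFinset_card _ _, Set.ncard_sdiff hsub htfin, hwt]
        congr 1
        have : {i | a i ≠ w i}.encard = k := ha.2.1
        rw [Set.ncard, this]; rfl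
      · intro i; simp
    · exact ⟨∅, fun h => absurd h ha⟩
  choose D hD using hDex
  set E : (ℕ → Fin n) → Finset ℕ := fun a => encW n a (D a) with hE
  have hagree : ∀ a ∈ X, ∀ a' ∈ X, ∀ i, t i ≠ none → a i = a' i := by
    intro a ha a' ha' i hi
    obtain ⟨x, hx⟩ := Option.ne_none_iff_exists'.1 hi
    rw [ha.2.2 i x hx, ha'.2.2 i x hx]
  have hinl : ∀ a ∈ X, ∀ i, Encodable.encode (Sum.inl i : ℕ ⊕ (ℕ × Fin n)) ∈ E a ↔
      a i ≠ w i ∧ t i = none := fun a ha i => (encW_inl ..).trans ((hD a ha).2 i)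
  have hinr : ∀ a ∈ X, ∀ i x, Encodable.encode (Sum.inr (i, x) : ℕ ⊕ (ℕ × Fin n)) ∈ E a ↔
      (a i ≠ w i ∧ t i = none) ∧ a i = x := fun a ha i x =>
    (encW_inr ..).trans (and_congr_left' ((hD a ha).2 i))
  have hEinj : Set.InjOn E X := by
    intro a ha a' ha' h
    funext i
    by_cases hti : t i = none
    · have h1 := hinr a ha i (a i)
      have h2 := hinr a' ha' i (a i)
      have h3 := hinl a ha i
      have h4 := hinl a' ha' i
      rw [h] at h1 h3
      by_cases hi : a i = w i
      · by_contra hne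
        exact (h3.1 (h4.2 ⟨fun h' => hne (hi.trans h'.symm), hti⟩)).1 hi
      · exact (h2.1 (h1.2 ⟨⟨hi, hti⟩, rfl⟩)).2.symm
    · exact hagree a ha a' ha' i hti
  obtain ⟨Y, hYX, hYc⟩ := Set.exists_subset_encard_eq (Order.add_one_le_of_lt hcon)
  have hYfin : Y.Finite := Set.encard_ne_top_iff.1 (by rw [hYc]; exact_mod_cast ENat.natCast_ne_top (N+1))
  lift Y to Finset (ℕ → Fin n) using hYfin
  rw [Set.encard_coe_eq_coe_finsetCard] at hYc
  have hYc' : Y.card = N + 1 := by exact_mod_cast hYc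
  obtain ⟨F, hFs, hFc, C, hC⟩ := hsun (Y.image E) (by
    intro A hA
    obtain ⟨a, ha, rfl⟩ := Finset.mem_image.1 hA
    rw [hE, encW_card, (hD a (hYX ha)).1]; omega) (by
    rw [Finset.card_image_of_injOn (hEinj.mono hYX), hYc']; omega)
  obtain ⟨G, hGY, hGF⟩ := Finset.subset_image_iff.1 hFs
  have hGX : ∀ a ∈ G, a ∈ X := fun a ha => hYX (hGY ha)
  have hGinj : Set.InjOn E (G : Set (ℕ → Fin n)) := hEinj.mono hGX
  have hGc : G.card = d + n := by
    rw [← hFc, ← hGF, Finset.card_image_of_injOn hGinj]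
  have hCG : ∀ a ∈ G, ∀ a' ∈ G, a ≠ a' → E a ∩ E a' = C := by
    intro a ha a' ha' hne
    refine hC _ ?_ _ ?_ (fun h => hne (hGinj ha ha' h))
    · rw [← hGF]; exact Finset.mem_image_of_mem _ ha
    · rw [← hGF]; exact Finset.mem_image_of_mem _ ha'
  have hCsub : ∀ z ∈ C, ∀ a ∈ G, z ∈ E a := by
    intro z hz a ha
    obtain ⟨a', ha', hne⟩ := Finset.exists_mem_ne (s := G) (by omega) a
    rw [← hCG a ha a' ha' hne.symm] at hz
    exact (Finset.mem_inter.1 hz).1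
  -- key dichotomy
  have hkey : ∀ i, ∀ a ∈ G, ∀ a' ∈ G, a ≠ a' → a i ≠ w i → a' i ≠ w i →
      ∀ c ∈ G, ∀ c' ∈ G, c i = c' i := by
    intro i a ha a' ha' hne hai hai' 
    by_cases hti : t i = none
    · have hiC : Encodable.encode (Sum.inl i : ℕ ⊕ (ℕ × Fin n)) ∈ C := by
        rw [← hCG a ha a' ha' hne, Finset.mem_inter, hinl a (hGX a ha), hinl a' (hGX a' ha')]
        exact ⟨⟨hai, hti⟩, ⟨hai', hti⟩⟩
      have hall : ∀ c ∈ G, c i ≠ w i := fun c hc =>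
        ((hinl c (hGX c hc) i).1 (hCsub _ hiC c hc)).1
      obtain ⟨c, hc, c', hc', hcc, hci⟩ := Finset.exists_ne_map_eq_of_card_lt_of_maps_to
        (s := G) (t := (Finset.univ : Finset (Fin n))) (f := fun c => c i)
        (by rw [hGc, Finset.card_univ, Fintype.card_fin]; omega) (by intro _ _; simp)
      have hciC : Encodable.encode (Sum.inr (i, c i) : ℕ ⊕ (ℕ × Fin n)) ∈ C := by
        rw [← hCG c hc c' hc' hcc, Finset.mem_inter, hinr c (hGX c hc), hinr c' (hGX c' hc')]
        exact ⟨⟨⟨hall c hc, hti⟩, rfl⟩, ⟨⟨hall c' hc', hti⟩, hci.symm⟩⟩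
      have hev : ∀ e ∈ G, e i = c i := fun e he =>
        ((hinr e (hGX e he) i _).1 (hCsub _ hciC e he)).2
      intro e he e' he'
      rw [hev e he, hev e' he']
    · intro c hc c' hc'
      exact hagree c (hGX c hc) c' (hGX c' hc') i hti
  obtain ⟨a0, ha0⟩ : G.Nonempty := Finset.card_pos.1 (by omega)
  set b : ℕ → Fin n := fun i => if ∀ a ∈ G, a i = a0 i then a0 i else w i with hb
  have hb1 : ∀ i, b i ≠ w i → ∀ a ∈ G, a i = b i := by
    intro i hi a ha
    by_cases h : ∀ a ∈ G, a i = a0 i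
    · simp only [hb, if_pos h]; exact h a ha
    · simp only [hb, if_neg h] at hi; exact absurd rfl hi
  have hb2 : ∀ i, ∀ a ∈ G, a i ≠ b i → b i = w i := by
    intro i a ha h
    by_contra h'
    exact h (hb1 i h' a ha)
  have hb3 : ∀ i, (∀ a ∈ G, ∀ a' ∈ G, a i = a' i) → ∀ a ∈ G, a i = b i := by
    intro i h a ha
    have h' : ∀ a ∈ G, a i = a0 i := fun a ha => h a ha a0 ha0
    simp only [hb, if_pos h']; exact h' a ha
  have hsum : ∀ a ∈ G, hDist n a b + hDist n b w = k := by
    intro a ha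
    have h1 : {i | a i ≠ w i} = {i | a i ≠ b i} ∪ {i | b i ≠ w i} := by
      ext i
      simp only [Set.mem_setOf_eq, Set.mem_union]
      constructor
      · intro h
        by_cases h' : a i = b i
        · right; rwa [← h']
        · exact Or.inl h'
      · rintro (h | h)
        · rwa [← hb2 i a ha h]
        · rwa [hb1 i h a ha]
    rw [← (hGX a ha).2.1]
    unfold hDist
    rw [h1, Set.encard_union_eq]
    rw [Set.disjoint_left]
    exact fun i hi h' => h' (hb2 i a ha hi)
  have hbw : hDist n b w ≠ ⊤ := by
    intro h
    have := hsum a0 ha0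
    rw [h] at this
    simp at this
  have ha0b : hDist n a0 b ≠ ⊤ := by
    intro h
    have := hsum a0 ha0
    rw [h] at this
    simp at this
  obtain ⟨r, hr⟩ := ENat.ne_top_iff_exists.1 ha0b
  have hrall : ∀ a ∈ G, hDist n a b = r := by
    intro a ha
    have := (hsum a ha).trans (hsum a0 ha0).symm
    rw [← hr] at this
    exact (WithTop.add_right_inj hbw).1 this
  refine sell_core n d hn S hmax ℓ r ?_ G hGc (fun a ha => (hGX a ha).1) b hrall ?_
  · by_contra hr0
    have hr0 : r = 0 := by omega
    have heq : ∀ a ∈ G, a = b := by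
      intro a ha
      have h := hrall a ha
      rw [hr0] at h
      have h' : {i | a i ≠ b i} = ∅ := Set.encard_eq_zero.1 h
      funext i
      by_contra hi
      have : i ∈ ({i | a i ≠ b i} : Set ℕ) := hi
      rw [h'] at this
      exact this
    obtain ⟨a', ha', hne⟩ := Finset.exists_mem_ne (s := G) (by omega) a0
    exact hne ((heq a' ha').trans (heq a0 ha0).symm)
  · intro a ha a' ha' i hi hi'
    by_contra hne
    have h1 := hb2 i a ha hi
    rw [h1] at hi hi'
    have := hb3 i (hkey i a ha a' ha' hne hi hi') a ha
    rw [h1] at this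
    exact hi this
end

section
/- Let n ≥ 2 and d ≥ 1 be integers, let S ⊆ [n]^∞ be a d-maximal set that contains no 1-ball, and let w ∈ S. Then for every integer k with 0 ≤ k ≤ d, the set S_k = {a ∈ S : dist(a,w) = k} satisfies |S_k| ≤ (n/2)^k·binom(2d,k) (as real numbers). -/
open Classical in
theorem hDist_eq_sum (n : ℕ) (a b : ℕ → Fin n) (U : Finset ℕ) (h : ∀ i, a i ≠ b i → i ∈ U) :
    hDist n a b = ((∑ i ∈ U, if a i ≠ b i then 1 else 0 : ℕ) : ℕ∞) := by
  have : {i | a i ≠ b i} = ((U.filter (fun i => a i ≠ b i) : Finset ℕ) : Set ℕ) := by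
    ext i
    simp only [Set.mem_ofPred_eq, Finset.coe_filter]
    exact ⟨fun hi => ⟨h i hi, hi⟩, fun hi => hi.2⟩
  unfold hDist
  rw [this, Set.encard_coe_eq_coe_finsetCard, Finset.card_filter]

theorem hDist_finite (n : ℕ) (a b : ℕ → Fin n) (k : ℕ) (h : hDist n a b ≤ (k : ℕ∞)) :
    {i | a i ≠ b i}.Finite := Set.finite_of_encard_le_coe h

open Classical in
theorem exists_far (n d : ℕ) (S : Set (ℕ → Fin n))
    (hmax : IsDMaximal n d S) (hball : ¬ ContainsBall n S 1) (x : ℕ → Fin n) :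
    ∃ s ∈ S, (d : ℕ∞) ≤ hDist n x s := by
  by_contra hcon
  push Not at hcon
  apply hball
  refine ⟨x, fun y hy => hmax.2.2 y fun s hs => ?_⟩
  have h1 : hDist n y s ≤ hDist n y x + hDist n x s := by
    unfold hDist
    refine le_trans (Set.encard_le_encard ?_) (Set.encard_union_le _ _)
    intro i hi
    by_contra hc
    simp only [Set.mem_union, Set.mem_ofPred_eq, not_or, not_not] at hc
    exact hi (hc.1.trans hc.2)
  have h2 := hcon s hs
  have h3 : hDist n y x ≤ 1 := by simpa [hBall] using hy
  calc hDist n y s ≤ 1 + hDist n x s := h1.trans (by gcongr)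
    _ = hDist n x s + 1 := add_comm _ _
    _ ≤ d := Order.add_one_le_of_lt h2

/-- the weight -/
def cw {n : ℕ} (w s v : Fin n) : ℕ := if v = w then 0 else if v = s then 2 else 1

theorem sum_cw {n : ℕ} (w s : Fin n) (h : s ≠ w) : ∑ v, cw w s v = n := by
  have : ∀ v, cw w s v + (if v = w then 1 else 0) = 1 + (if v = s then 1 else 0) := by
    intro v
    unfold cw
    split_ifs <;> simp_all
  have h2 := Finset.sum_congr (rfl : (Finset.univ : Finset (Fin n)) = Finset.univ) (fun v _ => this v)
  simp [Finset.sum_add_distrib] at h2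
  exact h2

open Classical in
theorem main_ind (n d : ℕ) (S : Set (ℕ → Fin n))
    (hmax : IsDMaximal n d S) (hball : ¬ ContainsBall n S 1)
    (w : ℕ → Fin n) (hw : w ∈ S) (t : ℕ) : ∀ (j : ℕ) (x : ℕ → Fin n), j + t ≤ d →
    hDist n x w = (j : ℕ∞) →
    {a ∈ S | hDist n a w = ((j + t : ℕ) : ℕ∞) ∧ ∀ i, x i ≠ w i → a i = x i}.Finite ∧
    2 ^ t * {a ∈ S | hDist n a w = ((j + t : ℕ) : ℕ∞) ∧ ∀ i, x i ≠ w i → a i = x i}.ncard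
      ≤ n ^ t * (2 * d - j).choose t := by
  induction t with
  | zero =>
    intro j x hj hx
    have hsub : {a ∈ S | hDist n a w = ((j + 0 : ℕ) : ℕ∞) ∧ ∀ i, x i ≠ w i → a i = x i} ⊆ {x} := by
      rintro a ⟨-, ha, hax⟩
      have hfin := hDist_finite n x w _ hx.le
      have : {i | x i ≠ w i} = {i | a i ≠ w i} := by
        apply hfin.eq_of_subset_of_encard_le
        · intro i hi
          simp only [Set.mem_ofPred_eq] at hi ⊢
          rw [hax i hi]; exact hi
        · unfold hDist at ha hx
          rw [ha, hx]; simp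
      funext i
      by_cases hi : x i = w i
      · have : ¬ (a i ≠ w i) := fun h => by
          have : i ∈ {i | x i ≠ w i} := by rw [this]; exact h
          exact this hi
        rw [hi]; exact not_not.mp this
      · exact hax i hi
    refine ⟨(Set.finite_singleton x).subset hsub, ?_⟩
    have := Set.ncard_le_ncard hsub
    simpa using this
  | succ t ih =>
    intro j x hj hx
    obtain ⟨s, hs, hxs⟩ := exists_far n d S hmax hball x
    set T := {a ∈ S | hDist n a w = ((j + (t + 1) : ℕ) : ℕ∞) ∧ ∀ i, x i ≠ w i → a i = x i} with hT
    have hJ := hDist_finite n x w _ hx.le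
    have hws := hDist_finite n w s _ (hmax.1 w hw s hs)
    set U0 : Finset ℕ := hJ.toFinset ∪ hws.toFinset with hU0
    set E : Finset ℕ := U0.filter (fun i => x i ≠ s i ∧ x i = w i) with hE
    set N : ℕ := ∑ i ∈ U0, if x i ≠ s i then 1 else 0 with hN
    have hxsU : ∀ i, x i ≠ s i → i ∈ U0 := by
      intro i hi
      by_contra hc
      simp [hU0] at hc
      exact hi (hc.1.trans hc.2)
    have hNd : d ≤ N := by
      rw [hDist_eq_sum n x s U0 hxsU] at hxs
      exact_mod_cast hxs
    -- size of E
    have hEcard : 2 * E.card + j ≤ N + d := by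
      have e1 : (∑ i ∈ U0, if x i ≠ w i then 1 else 0) = j := by
        rw [hDist_eq_sum n x w U0 (by intro i hi; simp [hU0, hi])] at hx
        exact_mod_cast hx
      have e2 : (∑ i ∈ U0, if w i ≠ s i then 1 else 0) ≤ d := by
        have := hmax.1 w hw s hs
        rw [hDist_eq_sum n w s U0 (by intro i hi; simp [hU0, hi])] at this
        exact_mod_cast this
      have e3 : E.card = ∑ i ∈ U0, if (x i ≠ s i ∧ x i = w i) then 1 else 0 := by
        rw [hE, Finset.card_filter]
      have e4 : ∑ i ∈ U0, (2 * (if (x i ≠ s i ∧ x i = w i) then 1 else 0) + if x i ≠ w i then 1 else 0)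
          ≤ ∑ i ∈ U0, ((if x i ≠ s i then 1 else 0) + if w i ≠ s i then 1 else 0) := by
        apply Finset.sum_le_sum
        intro i _
        by_cases h1 : x i = w i <;> by_cases h2 : x i = s i <;> by_cases h3 : w i = s i <;> simp_all
      rw [Finset.sum_add_distrib, Finset.sum_add_distrib, ← Finset.mul_sum, ← e3, e1] at e4
      omega
    -- weight bound
    have hwt : ∀ a ∈ T, N + (t + 1) ≤ d + ∑ i ∈ E, cw (w i) (s i) (a i) := by
      rintro a ⟨haS, haw, hax⟩
      have hA := hDist_finite n a w _ haw.le
      set U : Finset ℕ := U0 ∪ hA.toFinset with hU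
      have hsub : U0 ⊆ U := Finset.subset_union_left
      have hwsU : ∀ i, w i ≠ s i → i ∈ U := fun i hi => hsub (by simp [hU0, hi])
      have hawU : ∀ i, a i ≠ w i → i ∈ U := fun i hi => by simp [hU, hi]
      have e1 : (∑ i ∈ U, if x i ≠ w i then 1 else 0) = j := by
        rw [hDist_eq_sum n x w U (fun i hi => hsub (by simp [hU0, hi]))] at hx
        exact_mod_cast hx
      have e2 : (∑ i ∈ U, if a i ≠ w i then 1 else 0) = j + (t + 1) := by
        rw [hDist_eq_sum n a w U hawU] at haw
        exact_mod_cast haw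
      have e3 : (∑ i ∈ U, if a i ≠ s i then 1 else 0) ≤ d := by
        have := hmax.1 a haS s hs
        rw [hDist_eq_sum n a s U (fun i hi => by
          by_cases h : a i = w i
          · exact hwsU i (h ▸ hi)
          · exact hawU i h)] at this
        exact_mod_cast this
      have e4 : (∑ i ∈ U, if x i ≠ s i then 1 else 0) = N := by
        rw [hN]
        symm
        apply Finset.sum_subset hsub
        intro i _ hi
        rw [if_neg]
        exact fun h => hi (hxsU i h)
      have e5 : ∑ i ∈ E, cw (w i) (s i) (a i)
          = ∑ i ∈ U, if (x i ≠ s i ∧ x i = w i) then cw (w i) (s i) (a i) else 0 := by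
        rw [hE, Finset.sum_filter]
        apply Finset.sum_subset hsub
        intro i _ hi
        rw [if_neg]
        exact fun h => hi (hxsU i h.1)
      have e6 : ∑ i ∈ U, ((if x i ≠ s i then 1 else 0) + if a i ≠ w i then 1 else 0)
          ≤ ∑ i ∈ U, (((if a i ≠ s i then 1 else 0) + (if x i ≠ w i then 1 else 0)) +
            if (x i ≠ s i ∧ x i = w i) then cw (w i) (s i) (a i) else 0) := by
        apply Finset.sum_le_sum
        intro i _
        have := hax i
        unfold cw
        by_cases h1 : x i = w i
        · by_cases h2 : a i = w i
          · simp [h1, h2]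
          · by_cases h3 : w i = s i
            · simp [h1, h2, ← h3]
            · by_cases h4 : a i = s i
              · have : ¬ s i = w i := fun h => h3 h.symm
                simp [h1, h3, h4, this]
              · simp [h1, h2, h3, h4]
        · simp [this h1, h1]
      rw [Finset.sum_add_distrib, Finset.sum_add_distrib, Finset.sum_add_distrib, e1, e2, e4, ← e5] at e6
      omega
    -- children
    have hch : ∀ i ∈ E, ∀ v, v ≠ w i → ({a ∈ T | a i = v}.Finite ∧
        2 ^ t * {a ∈ T | a i = v}.ncard ≤ n ^ t * (2 * d - (j + 1)).choose t) := by
      intro i hi v hv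
      have hxi : x i = w i := (Finset.mem_filter.mp hi).2.2
      have hd' : hDist n (Function.update x i v) w = ((j + 1 : ℕ) : ℕ∞) := by
        have : {l | Function.update x i v l ≠ w l} = insert i {l | x l ≠ w l} := by
          ext l
          by_cases hl : l = i
          · subst hl; simp [hv]
          · simp [hl]
        unfold hDist at hx ⊢
        rw [this, Set.encard_insert_of_notMem (by simp [hxi]), hx]
        simp
      have key := ih (j + 1) (Function.update x i v) (by omega) hd'
      have heq : {a ∈ T | a i = v} = {a ∈ S | hDist n a w = ((j + 1 + t : ℕ) : ℕ∞) ∧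
          ∀ l, Function.update x i v l ≠ w l → a l = Function.update x i v l} := by
        ext a
        simp only [hT, Set.mem_ofPred_eq]
        rw [show j + (t + 1) = j + 1 + t by ring]
        constructor
        · rintro ⟨⟨h1, h2, h3⟩, h4⟩
          refine ⟨h1, h2, fun l hl => ?_⟩
          by_cases hli : l = i
          · subst hli; simp [h4]
          · simp only [Function.update_of_ne hli] at hl ⊢
            exact h3 l hl
        · rintro ⟨h1, h2, h3⟩
          refine ⟨⟨h1, h2, fun l hl => ?_⟩, ?_⟩
          · have hli : l ≠ i := fun h => hl (h ▸ hxi)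
            have := h3 l
            simp only [Function.update_of_ne hli] at this
            exact this hl
          · have := h3 i
            simp only [Function.update_self] at this
            exact this hv
      rw [heq]
      exact key
    have hTfin : T.Finite := by
      have hfin : (⋃ i ∈ E, ⋃ v ∈ (Finset.univ.filter (fun v => v ≠ w i)), {a ∈ T | a i = v}).Finite := by
        apply Set.Finite.biUnion E.finite_toSet
        intro i hi
        apply Set.Finite.biUnion (Finset.finite_toSet _)
        intro v hv
        exact (hch i hi v (by simpa using hv)).1
      refine hfin.subset ?_
      intro a ha
      have h1 := hwt a ha
      have h2 : ∑ i ∈ E, cw (w i) (s i) (a i) ≠ 0 := by omega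
      obtain ⟨i, hi, hc⟩ := Finset.exists_ne_zero_of_sum_ne_zero h2
      have hne : a i ≠ w i := fun h => hc (by simp [cw, h])
      simp only [Set.mem_iUnion]
      exact ⟨i, hi, a i, by simp [hne], ha, rfl⟩
    refine ⟨hTfin, ?_⟩
    set F := hTfin.toFinset with hF
    have hcard : T.ncard = F.card := Set.ncard_eq_toFinset_card T hTfin
    rw [hcard]
    obtain ⟨m, hm⟩ := Nat.exists_eq_add_of_le hNd
    have hdc : ∑ a ∈ F, ∑ i ∈ E, cw (w i) (s i) (a i)
        = ∑ i ∈ E, ∑ v, cw (w i) (s i) v * (F.filter (fun a => a i = v)).card := by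
      rw [Finset.sum_comm]
      apply Finset.sum_congr rfl
      intro i _
      rw [← Finset.sum_fiberwise F (fun a => a i)]
      apply Finset.sum_congr rfl
      intro v _
      rw [Finset.sum_congr rfl (g := fun _ => cw (w i) (s i) v)]
      · simp [mul_comm]
      · intro a ha
        rw [(Finset.mem_filter.mp ha).2]
    have hlow : F.card * (t + 1 + m) ≤ ∑ a ∈ F, ∑ i ∈ E, cw (w i) (s i) (a i) := by
      rw [← smul_eq_mul]
      apply Finset.card_nsmul_le_sum
      intro a ha
      have := hwt a (by simpa [hF] using ha)
      omega
    set C' := (2 * d - (j + 1)).choose t with hC'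
    have hup : 2 ^ t * ∑ i ∈ E, ∑ v, cw (w i) (s i) v * (F.filter (fun a => a i = v)).card
        ≤ E.card * (n * (n ^ t * C')) := by
      rw [Finset.mul_sum, ← smul_eq_mul]
      apply Finset.sum_le_card_nsmul
      intro i hi
      have hsw : s i ≠ w i := by
        have := (Finset.mem_filter.mp hi).2
        rw [← this.2]; exact this.1.symm
      rw [show n * (n ^ t * C') = (∑ v, cw (w i) (s i) v) * (n ^ t * C') by rw [sum_cw _ _ hsw],
        Finset.mul_sum, Finset.sum_mul]
      apply Finset.sum_le_sum
      intro v _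
      by_cases hv : v = w i
      · simp [cw, hv]
      · have h1 := (hch i hi v hv).2
        have h2 : {a ∈ T | a i = v}.ncard = (F.filter (fun a => a i = v)).card := by
          rw [← Set.ncard_coe_finset]
          congr 1
          ext a
          simp [hF]
        rw [h2] at h1
        calc _ = cw (w i) (s i) v * (2 ^ t * (F.filter (fun a => a i = v)).card) := by ring
          _ ≤ _ := Nat.mul_le_mul_left _ h1
    have hmain : 2 ^ t * F.card * (t + 1 + m) ≤ E.card * (n * (n ^ t * C')) := by
      calc _ = 2 ^ t * (F.card * (t + 1 + m)) := by ring
        _ ≤ _ := (Nat.mul_le_mul_left _ (hlow.trans hdc.le)).trans hup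
    obtain ⟨q, hq⟩ : ∃ q, 2 * d - j = q + 1 := ⟨2 * d - j - 1, by omega⟩
    have hq' : 2 * d - (j + 1) = q := by omega
    have hchoose : (q + 1) * C' = (q + 1).choose (t + 1) * (t + 1) := by
      rw [hC', hq']; exact Nat.add_one_mul_choose_eq q t
    rw [hq]
    have hE2 : 2 * E.card * (t + 1) ≤ (q + 1) * (t + 1 + m) := by
      have h1 : 2 * E.card ≤ (q + 1) + m := by omega
      have h2 : t + 1 ≤ q + 1 := by omega
      calc _ ≤ ((q + 1) + m) * (t + 1) := Nat.mul_le_mul_right _ h1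
        _ = (q + 1) * (t + 1) + m * (t + 1) := by ring
        _ ≤ (q + 1) * (t + 1) + m * (q + 1) := by gcongr
        _ = _ := by ring
    apply Nat.le_of_mul_le_mul_right (c := (t + 1) * (t + 1 + m)) _ (by positivity)
    calc 2 ^ (t + 1) * F.card * ((t + 1) * (t + 1 + m))
        = 2 * (t + 1) * (2 ^ t * F.card * (t + 1 + m)) := by ring
      _ ≤ 2 * (t + 1) * (E.card * (n * (n ^ t * C'))) := Nat.mul_le_mul_left _ hmain
      _ = (2 * E.card * (t + 1)) * (n ^ (t + 1) * C') := by ring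
      _ ≤ ((q + 1) * (t + 1 + m)) * (n ^ (t + 1) * C') := Nat.mul_le_mul_right _ hE2
      _ = (t + 1 + m) * n ^ (t + 1) * ((q + 1) * C') := by ring
      _ = (t + 1 + m) * n ^ (t + 1) * ((q + 1).choose (t + 1) * (t + 1)) := by rw [hchoose]
      _ = _ := by ring

theorem stmt13 (n d : ℕ) (hn : 2 ≤ n) (hd : 1 ≤ d) (S : Set (ℕ → Fin n))
    (hmax : IsDMaximal n d S) (hball : ¬ ContainsBall n S 1)
    (w : ℕ → Fin n) (hw : w ∈ S) (k : ℕ) (hk : k ≤ d) :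
    {a ∈ S | hDist n a w = (k : ℕ∞)}.Finite ∧
      ({a ∈ S | hDist n a w = (k : ℕ∞)}.ncard : ℝ) ≤
        ((n : ℝ) / 2) ^ k * ((2 * d).choose k : ℝ) := by
  have h := main_ind n d S hmax hball w hw k 0 w (by omega) (by simp [hDist])
  simp only [ne_eq, not_true_eq_false, false_imp_iff, implies_true, and_true, zero_add,
    Nat.sub_zero] at h
  refine ⟨h.1, ?_⟩
  have h2 : (2 : ℝ) ^ k * ({a ∈ S | hDist n a w = (k : ℕ∞)}.ncard : ℝ) ≤
      (n : ℝ) ^ k * ((2 * d).choose k : ℝ) := by exact_mod_cast h.2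
  rw [div_pow, div_mul_eq_mul_div, le_div_iff₀ (by positivity), mul_comm]
  exact h2
end

section
/- Let n ≥ 2, d ≥ 1, L ≥ 0 be integers with 2L ≤ d, let S ⊆ [n]^∞ be a d-maximal set containing no (L+1)-ball, and let ℓ ≥ 0. Let a, b ∈ S satisfy dist(a,b) = d, and assume (after reordering coordinates) that a and b differ exactly in the first d coordinates. For a word z, let z_{≤d} ∈ [n]^d denote its prefix of length d. For p ∈ [n]^d define S^{(ℓ)}(p) = {z ∈ S^{(ℓ)} : z_{≤d} = p} and m(p) = max(dist(a_{≤d}, p), dist(b_{≤d}, p)), and set Z = Sun(d+n, 2L). Then |S^{(ℓ)}(p)| ≤ d·Z·(n/2)^{d−m(p)}·binom(2d−m(p), d−m(p)) (as real numbers, with Sun(p,0) interpreted as 1). -/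
def GoodN (p k N : ℕ) : Prop := ∀ F : Finset (Finset ℕ), (∀ A ∈ F, A.card = k) → N < F.card →
    ∃ G ⊆ F, IsSunflowerFam p G

lemma good_step (p k N : ℕ) (h : GoodN p k N) (F : Finset (Finset ℕ))
    (hF : ∀ A ∈ F, A.card = k + 1) (hno : ¬ ∃ G ⊆ F, IsSunflowerFam p G) (q : ℕ)
    (hq : q * (k + 1) * N < F.card) :
    ∃ G ⊆ F, G.card = q ∧ ∀ A ∈ G, ∀ B ∈ G, A ≠ B → A ∩ B = ∅ := by
  induction q with
  | zero => exact ⟨∅, by simp, by simp, by simp⟩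
  | succ q ih =>
    obtain ⟨G, hGF, hGc, hG⟩ := ih (lt_of_le_of_lt (by gcongr; omega) hq)
    by_cases hall : ∀ A ∈ F, ∃ u ∈ G.biUnion id, u ∈ A
    · exfalso
      have hU : (G.biUnion id).card ≤ q * (k + 1) := by
        have := Finset.card_biUnion_le_card_mul G id (k + 1) (fun A hA => (hF A (hGF hA)).le)
        rwa [hGc] at this
      have hcov : F.card ≤ (G.biUnion id).card * N := by
        have hsub : F ⊆ (G.biUnion id).biUnion (fun u => F.filter (fun A => u ∈ A)) := by
          intro A hA
          obtain ⟨u, hu, huA⟩ := hall A hA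
          exact Finset.mem_biUnion.2 ⟨u, hu, Finset.mem_filter.2 ⟨hA, huA⟩⟩
        refine (Finset.card_le_card hsub).trans (Finset.card_biUnion_le_card_mul _ _ _ ?_)
        intro u _
        by_contra hlt
        push Not at hlt
        set Fu := F.filter (fun A => u ∈ A) with hFu
        have hinj : Set.InjOn (fun A : Finset ℕ => A.erase u) Fu := by
          intro A hA B hB hAB
          have h1 := (Finset.mem_filter.1 hA).2
          have h2 := (Finset.mem_filter.1 hB).2
          simp only at hAB
          rw [← Finset.insert_erase h1, ← Finset.insert_erase h2, hAB]
        obtain ⟨G', hG', hc', C, hC⟩ := h (Fu.image (fun A => A.erase u)) (by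
          intro A hA
          obtain ⟨B, hB, rfl⟩ := Finset.mem_image.1 hA
          have hB' := Finset.mem_filter.1 hB
          rw [Finset.card_erase_of_mem hB'.2, hF B hB'.1]; rfl) (by
          rw [Finset.card_image_of_injOn hinj]; exact hlt)
        have hnu : ∀ A ∈ G', u ∉ A ∧ insert u A ∈ F := by
          intro A hA
          obtain ⟨B, hB, rfl⟩ := Finset.mem_image.1 (hG' hA)
          have hB' := Finset.mem_filter.1 hB
          exact ⟨Finset.notMem_erase _ _, by rw [Finset.insert_erase hB'.2]; exact hB'.1⟩
        apply hno
        refine ⟨G'.image (insert u), ?_, ?_, insert u C, ?_⟩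
        · intro A hA
          obtain ⟨B, hB, rfl⟩ := Finset.mem_image.1 hA
          exact (hnu B hB).2
        · rw [Finset.card_image_of_injOn, hc']
          intro A hA B hB hAB
          rw [← Finset.erase_insert (hnu A hA).1, ← Finset.erase_insert (hnu B hB).1, hAB]
        · intro A hA B hB hAB
          obtain ⟨A, hA', rfl⟩ := Finset.mem_image.1 hA
          obtain ⟨B, hB', rfl⟩ := Finset.mem_image.1 hB
          rw [← Finset.insert_inter_distrib, hC A hA' B hB' (fun h => hAB (by rw [h]))]
      have := Nat.mul_le_mul_right N hU
      have h3 : q * (k + 1) * N ≤ (q + 1) * (k + 1) * N := by gcongr; omega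
      omega
    · push Not at hall
      obtain ⟨A, hA, hAu⟩ := hall
      have hdis : ∀ B ∈ G, A ∩ B = ∅ := by
        intro B hB
        ext x
        simp only [Finset.mem_inter, Finset.notMem_empty, iff_false, not_and]
        intro hx hxB
        exact hAu x (Finset.mem_biUnion.2 ⟨B, hB, hxB⟩) hx
      have hAG : A ∉ G := by
        intro h
        have h1 := hdis A h
        rw [Finset.inter_self] at h1
        have h2 := hF A hA
        rw [h1] at h2
        simp at h2
      refine ⟨insert A G, ?_, ?_, ?_⟩
      · intro B hB
        rcases Finset.mem_insert.1 hB with rfl | hB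
        · exact hA
        · exact hGF hB
      · rw [Finset.card_insert_of_notMem hAG, hGc]
      · intro X hX Y hY hXY
        rcases Finset.mem_insert.1 hX with h1 | h1 <;> rcases Finset.mem_insert.1 hY with h2 | h2
        · exact absurd (h1.trans h2.symm) hXY
        · rw [h1]; exact hdis _ h2
        · rw [h2, Finset.inter_comm]; exact hdis _ h1
        · exact hG _ h1 _ h2 hXY

lemma good_exists (p k : ℕ) : ∃ N, GoodN p k N := by
  induction k with
  | zero =>
    refine ⟨1, fun F hF hc => ?_⟩
    obtain ⟨A, hA, B, hB, hAB⟩ := Finset.one_lt_card.1 hc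
    exact absurd ((Finset.card_eq_zero.1 (hF A hA)).trans (Finset.card_eq_zero.1 (hF B hB)).symm) hAB
  | succ k ih =>
    obtain ⟨N, hN⟩ := ih
    refine ⟨p * (k + 1) * N, fun F hF hc => ?_⟩
    by_contra hno
    obtain ⟨G, hGF, hGc, hG⟩ := good_step p k N hN F hF hno p hc
    exact hno ⟨G, hGF, hGc, ∅, hG⟩

lemma good_down (p k N : ℕ) (h : GoodN p (k + 1) N) : GoodN p k N := by
  intro F hF hc
  obtain ⟨M, hM⟩ : ∃ M, ∀ A ∈ F, ∀ i ∈ A, i < M := by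
    refine ⟨(F.biUnion id).sup id + 1, fun A hA i hi => ?_⟩
    have : i ≤ (F.biUnion id).sup id :=
      Finset.le_sup (f := id) (Finset.mem_biUnion.2 ⟨A, hA, hi⟩)
    omega
  set φ : Finset ℕ → Finset ℕ := fun A => insert (M + Encodable.encode A) A with hφ
  have hrec : ∀ A ∈ F, (φ A).filter (· < M) = A := by
    intro A hA
    ext x
    simp only [hφ, Finset.mem_filter, Finset.mem_insert]
    constructor
    · rintro ⟨rfl | h, h2⟩
      · omega
      · exact h
    · intro h
      exact ⟨Or.inr h, hM A hA x h⟩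
  have hinj : Set.InjOn φ F := by
    intro A hA B hB hAB
    rw [← hrec A hA, ← hrec B hB, hAB]
  obtain ⟨G, hG, hGc, C, hC⟩ := h (F.image φ) (by
    intro A hA
    obtain ⟨B, hB, rfl⟩ := Finset.mem_image.1 hA
    rw [hφ]
    simp only
    rw [Finset.card_insert_of_notMem, hF B hB]
    intro hmem
    have := hM B hB _ hmem
    omega) (by rwa [Finset.card_image_of_injOn hinj])
  have hG2 : ∀ A ∈ G, ∃ B ∈ F, φ B = A := fun A hA => Finset.mem_image.1 (hG hA)
  refine ⟨G.image (fun A => A.filter (· < M)), ?_, ?_, C.filter (· < M), ?_⟩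
  · intro A hA
    obtain ⟨B, hB, rfl⟩ := Finset.mem_image.1 hA
    obtain ⟨D, hD, rfl⟩ := hG2 B hB
    rw [hrec D hD]; exact hD
  · rw [Finset.card_image_of_injOn, hGc]
    intro A hA B hB hAB
    obtain ⟨A, hA', rfl⟩ := hG2 A hA
    obtain ⟨B, hB', rfl⟩ := hG2 B hB
    simp only at hAB
    rw [hrec A hA', hrec B hB'] at hAB
    rw [hAB]
  · intro A hA B hB hAB
    obtain ⟨A, hA', rfl⟩ := Finset.mem_image.1 hA
    obtain ⟨B, hB', rfl⟩ := Finset.mem_image.1 hB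
    rw [← Finset.filter_inter_distrib, hC A hA' B hB' (fun h => hAB (by rw [h]))]

lemma sun_good (p r k : ℕ) (hr : r ≤ k) : GoodN p r (Sun p k) := by
  have h0 : GoodN p k (Sun p k) := by
    have := good_exists p k
    exact Nat.sInf_mem (s := {N | GoodN p k N}) this
  obtain ⟨j, rfl⟩ := Nat.exists_eq_add_of_le hr
  generalize Sun p (r + j) = N at h0
  induction j with
  | zero => exact h0
  | succ j ih => exact ih (by omega) (good_down _ _ _ h0)

def Adm (n d r : ℕ) (a c z : ℕ → Fin n) (A : Finset ℕ) : Prop :=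
  A.card = r ∧ (∀ i, i ∈ A ↔ z i ≠ c i) ∧ ∀ i ∈ A, c i = a i ∧ d ≤ i

lemma tail1 (n d : ℕ) (s e : ℕ → Fin n) (h : hDist n s e ≤ (d : ℕ∞)) :
    ∃ B : Finset ℕ, (∀ i, i ∈ B ↔ d ≤ i ∧ s i ≠ e i) ∧
      B.card + hammingDist (fun i : Fin d => e i) (fun i : Fin d => s i) ≤ d := by
  classical
  unfold hDist at h
  have hfin : {i | s i ≠ e i}.Finite := Set.finite_of_encard_le_coe h
  rw [hfin.encard_eq_coe_toFinset_card] at h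
  have h' : hfin.toFinset.card ≤ d := by exact_mod_cast h
  refine ⟨hfin.toFinset.filter (d ≤ ·), ?_, ?_⟩
  · intro i
    simp only [Finset.mem_filter, Set.Finite.mem_toFinset, Set.mem_ofPred_eq]
    tauto
  · refine le_trans ?_ h'
    unfold hammingDist
    rw [← Finset.card_map Fin.valEmbedding, ← Finset.card_union_of_disjoint]
    · apply Finset.card_le_card
      intro i hi
      simp only [Finset.mem_union, Finset.mem_filter, Set.Finite.mem_toFinset, Set.mem_ofPred_eq,
        Finset.mem_map, Finset.mem_univ, true_and, Fin.valEmbedding_apply] at hi ⊢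
      rcases hi with hi | ⟨j, hj, rfl⟩
      · exact hi.1
      · exact Ne.symm hj
    · rw [Finset.disjoint_left]
      intro i hi hi2
      simp only [Finset.mem_filter, Finset.mem_map, Fin.valEmbedding_apply] at hi hi2
      obtain ⟨j, _, rfl⟩ := hi2
      have := j.2
      omega

lemma tail2 (n d : ℕ) (S : Set (ℕ → Fin n)) (hS : ∀ a ∈ S, ∀ b ∈ S, hDist n a b ≤ (d : ℕ∞))
    (a b : ℕ → Fin n) (ha : a ∈ S) (hb : b ∈ S)
    (hfirst : {i | a i ≠ b i} = Set.Iio d) (s : ℕ → Fin n) (hs : s ∈ S) :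
    ∃ B : Finset ℕ, (∀ i, i ∈ B ↔ d ≤ i ∧ s i ≠ a i) ∧
      B.card + hammingDist (fun i : Fin d => a i) (fun i : Fin d => s i) ≤ d ∧
      B.card + hammingDist (fun i : Fin d => b i) (fun i : Fin d => s i) ≤ d ∧
      2 * B.card ≤ d := by
  classical
  obtain ⟨B, hB, h1⟩ := tail1 n d s a (hS s hs a ha)
  obtain ⟨B', hB', h2⟩ := tail1 n d s b (hS s hs b hb)
  have hiff : ∀ i, a i ≠ b i ↔ i < d := fun i => by
    have : i ∈ {i | a i ≠ b i} ↔ i ∈ Set.Iio d := by rw [hfirst]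
    simpa using this
  have hBB : B' = B := by
    ext i
    rw [hB, hB']
    refine and_congr_right fun hi => ?_
    have : a i = b i := by
      by_contra h
      have := (hiff i).1 h
      omega
    rw [this]
  subst hBB
  refine ⟨B', hB, h1, h2, ?_⟩
  have h3 : hammingDist (fun i : Fin d => a i) (fun i : Fin d => b i) = d := by
    unfold hammingDist
    rw [Finset.filter_true_of_mem]
    · simp
    · intro i _
      exact (hiff i).2 i.2
  have h4 := hammingDist_triangle_right (fun i : Fin d => a i) (fun i : Fin d => b i)
    (fun i : Fin d => s i)
  omega

lemma ball_far (n d ℓ : ℕ) (hn : 2 ≤ n) (S : Set (ℕ → Fin n))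
    (hS : ∀ a ∈ S, ∀ b ∈ S, hDist n a b ≤ (d : ℕ∞)) (z s : ℕ → Fin n)
    (hz : hBall n z ℓ ⊆ S) (hzS : z ∈ S) (hs : s ∈ S) : hDist n z s + ℓ ≤ (d : ℕ∞) := by
  classical
  have hfin : {i | z i ≠ s i}.Finite := Set.finite_of_encard_le_coe (hS z hzS s hs)
  obtain ⟨T, hT, hTc⟩ := hfin.infinite_compl.exists_subset_card_eq ℓ
  have : Nontrivial (Fin n) := Fin.nontrivial_iff_two_le.2 hn
  choose f hf using fun x : Fin n => exists_ne x
  let y : ℕ → Fin n := fun i => if i ∈ T then f (z i) else z i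
  have hy : y ∈ S := by
    apply hz
    show {i | y i ≠ z i}.encard ≤ (ℓ : ℕ∞)
    rw [← hTc, ← Set.encard_coe_eq_coe_finsetCard]
    apply Set.encard_le_encard
    intro i hi
    by_contra hiT
    apply hi
    have : i ∉ T := hiT
    simp [y, this]
  refine le_trans ?_ (hS y hy s hs)
  unfold hDist
  rw [← hTc, ← Set.encard_coe_eq_coe_finsetCard, ← Set.encard_union_eq]
  · apply Set.encard_le_encard
    rintro i (hi | hi)
    · have : i ∉ T := fun h => hT h hi
      simpa [y, this] using hi
    · have h1 : i ∈ T := hi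
      have h2 : z i = s i := by
        have := hT hi
        simpa using this
      show y i ≠ s i
      simp only [y, h1, if_true]
      rw [← h2]
      exact hf _
  · rw [Set.disjoint_left]
    intro i hi hiT
    exact hT hiT hi

lemma sun_contra (n d ℓ r : ℕ) (hn : 2 ≤ n) (hd : 1 ≤ d) (S : Set (ℕ → Fin n))
    (hmax : IsDMaximal n d S)
    (a b : ℕ → Fin n) (ha : a ∈ S) (hb : b ∈ S)
    (hfirst : {i | a i ≠ b i} = Set.Iio d)
    (c x : ℕ → Fin n) (Q : Finset (ℕ → Fin n)) (D : (ℕ → Fin n) → Finset ℕ)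
    (hQ : ∀ z ∈ Q, z ∈ Sell n S ℓ) (hD : ∀ z ∈ Q, Adm n d r a c z (D z))
    (hx : ∀ z ∈ Q, ∀ i ∈ D z, z i = x i) (C : Finset ℕ)
    (hC : ∀ z ∈ Q, ∀ z' ∈ Q, z ≠ z' → D z ∩ D z' = C) (hc : d < Q.card) : False := by
  classical
  obtain ⟨hS, -, hM⟩ := hmax
  obtain ⟨z, hz, z', hz', hne⟩ := Finset.one_lt_card.1 (by omega : 1 < Q.card)
  have hCsub : ∀ u ∈ Q, C ⊆ D u := by
    intro u hu
    by_cases h : u = z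
    · rw [← hC u hu z' hz' (h ▸ hne)]; exact Finset.inter_subset_left
    · rw [← hC u hu z hz h]; exact Finset.inter_subset_left
  have hinj : ∀ u ∈ Q, ∀ v ∈ Q, D u = D v → u = v := by
    intro u hu v hv huv
    funext i
    by_cases hi : i ∈ D u
    · rw [hx u hu i hi, hx v hv i (huv ▸ hi)]
    · have h1 : u i = c i := by
        by_contra h; exact hi (((hD u hu).2.1 i).2 h)
      have h2 : v i = c i := by
        by_contra h; exact hi (huv ▸ ((hD v hv).2.1 i).2 h)
      rw [h1, h2]
  obtain ⟨i0, hi0⟩ : ∃ i0, i0 ∈ D z \ C := by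
    by_contra h
    push Not at h
    have h1 : D z ⊆ C := by
      intro i hi
      by_contra h2
      exact h i (Finset.mem_sdiff.2 ⟨hi, h2⟩)
    have h2 : D z = D z' := Finset.eq_of_subset_of_card_le (h1.trans (hCsub z' hz'))
      (by rw [(hD z hz).1, (hD z' hz').1])
    exact hne (hinj z hz z' hz' h2)
  set c' : ℕ → Fin n := fun i => if i ∈ C then x i else c i with hc'
  have hpet : ∀ u ∈ Q, ∀ i, u i ≠ c' i ↔ i ∈ D u \ C := by
    intro u hu i
    rw [Finset.mem_sdiff]
    by_cases hi : i ∈ C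
    · simp [hc', hi, hx u hu i (hCsub u hu hi)]
    · simp [hc', hi, (hD u hu).2.1 i]
  have hpc : ∀ u ∈ Q, (D u \ C).card = r - C.card := by
    intro u hu
    rw [Finset.card_sdiff_of_subset (hCsub u hu), (hD u hu).1]
  have key : ∀ s ∈ S, hDist n c' s + ((r - C.card : ℕ) : ℕ∞) + ℓ ≤ (d : ℕ∞) := by
    intro s hs
    obtain ⟨B, hB, -, -, hB2⟩ := tail2 n d S hS a b ha hb hfirst s hs
    obtain ⟨u, hu, hdis⟩ : ∃ u ∈ Q, ∀ i ∈ D u \ C, i ∉ B := by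
      by_contra h
      push Not at h
      choose! f hf1 hf2 using h
      have : Q.card ≤ B.card := by
        apply Finset.card_le_card_of_injOn f (fun u hu => hf2 u hu)
        intro u hu v hv huv
        by_contra hne
        have h1 := Finset.mem_sdiff.1 (hf1 u hu)
        have h2 := Finset.mem_sdiff.1 (hf1 v hv)
        apply h1.2
        rw [← hC u hu v hv hne]
        exact Finset.mem_inter.2 ⟨h1.1, huv ▸ h2.1⟩
      omega
    refine le_trans ?_ (ball_far n d ℓ hn S hS u s (hQ u hu).2.1 (hQ u hu).1 hs)
    gcongr
    unfold hDist
    rw [← hpc u hu, ← Set.encard_coe_eq_coe_finsetCard, ← Set.encard_union_eq]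
    · apply Set.encard_le_encard
      rintro i (hi | hi)
      · by_cases hp : i ∈ D u \ C
        · exfalso
          have h1 := hdis i hp
          have h2 := Finset.mem_sdiff.1 hp
          have h3 := (hD u hu).2.2 i h2.1
          rw [hB] at h1
          apply hi
          simp only [hc', h2.2, if_false]
          by_contra h4
          exact h1 ⟨h3.2, fun h5 => h4 (h3.1.trans h5.symm)⟩
        · have : u i = c' i := by
            by_contra h
            exact hp ((hpet u hu i).1 h)
          show u i ≠ s i
          rw [this]; exact hi
      · have hp : i ∈ D u \ C := hi
        have h1 := hdis i hp
        have h2 := Finset.mem_sdiff.1 hp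
        have h3 := (hD u hu).2.2 i h2.1
        have h4 := ((hD u hu).2.1 i).1 h2.1
        rw [hB] at h1
        have h5 : s i = a i := by
          by_contra h; exact h1 ⟨h3.2, h⟩
        show u i ≠ s i
        rw [h5, ← h3.1]; exact h4
    · rw [Set.disjoint_left]
      intro i hi hp
      have hp : i ∈ D u \ C := hp
      have h1 := hdis i hp
      have h2 := Finset.mem_sdiff.1 hp
      have h3 := (hD u hu).2.2 i h2.1
      rw [hB] at h1
      apply hi
      simp only [hc', h2.2, if_false]
      by_contra h4
      exact h1 ⟨h3.2, fun h5 => h4 (h3.1.trans h5.symm)⟩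
  set w := Function.update z i0 (c i0) with hw
  have hwz : ∀ i, i ≠ i0 → w i = z i := fun i hi => by simp [hw, hi]
  have hw0 : w i0 = c' i0 := by
    have := (Finset.mem_sdiff.1 hi0).2
    simp [hw, hc', this]
  apply (hQ z hz).2.2
  refine ⟨w, ?_, ?_⟩
  · intro y hy
    have hy : {i | y i ≠ z i}.encard ≤ (ℓ : ℕ∞) := hy
    show {i | y i ≠ w i}.encard ≤ ((ℓ + 1 : ℕ) : ℕ∞)
    calc {i | y i ≠ w i}.encard ≤ (insert i0 {i | y i ≠ z i}).encard := by
          apply Set.encard_le_encard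
          intro i hi
          by_cases h : i = i0
          · exact Or.inl h
          · right
            have hi : y i ≠ w i := hi
            rw [hwz i h] at hi
            exact hi
      _ ≤ {i | y i ≠ z i}.encard + 1 := Set.encard_insert_le _ _
      _ ≤ ((ℓ + 1 : ℕ) : ℕ∞) := by push_cast; gcongr
  · intro y hy
    have hy : {i | y i ≠ w i}.encard ≤ ((ℓ + 1 : ℕ) : ℕ∞) := hy
    apply hM
    intro s hs
    have hk := key s hs
    have hpos : 0 < (D z \ C).card := Finset.card_pos.2 ⟨i0, hi0⟩
    have hle : hDist n y s ≤ ((ℓ + 1 : ℕ) : ℕ∞) + (((D z \ C).erase i0).card : ℕ∞) + hDist n c' s := by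
      unfold hDist
      rw [← Set.encard_coe_eq_coe_finsetCard]
      refine le_trans (Set.encard_le_encard (t := {i | y i ≠ w i} ∪ ↑((D z \ C).erase i0) ∪
        {i | c' i ≠ s i}) ?_) ?_
      · intro i hi
        by_contra hcon
        simp only [Set.mem_union, Set.mem_ofPred_eq, not_or, not_not] at hcon
        obtain ⟨⟨h1, h2⟩, h3⟩ := hcon
        apply hi
        rw [h1, ← h3]
        by_cases h : i = i0
        · rw [h]; exact hw0
        · rw [hwz i h]
          by_contra h4
          exact h2 (Finset.mem_coe.2 (Finset.mem_erase.2 ⟨h, (hpet z hz i).1 h4⟩))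
      · refine (Set.encard_union_le _ _).trans ?_
        gcongr
        refine (Set.encard_union_le _ _).trans ?_
        gcongr
    rw [Finset.card_erase_of_mem hi0] at hle
    rw [hpc z hz] at hle hpos
    refine hle.trans ?_
    generalize hDist n c' s = t at hk
    have ht : t ≠ ⊤ := by
      rintro rfl
      simp at hk
    lift t to ℕ using ht
    norm_cast at hk ⊢
    omega

lemma base_fix (n d ℓ r L : ℕ) (hn : 2 ≤ n) (hd : 1 ≤ d) (S : Set (ℕ → Fin n))
    (hmax : IsDMaximal n d S)
    (a b : ℕ → Fin n) (ha : a ∈ S) (hb : b ∈ S)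
    (hfirst : {i | a i ≠ b i} = Set.Iio d)
    (c x : ℕ → Fin n) (F : Finset (ℕ → Fin n)) (D : (ℕ → Fin n) → Finset ℕ)
    (hF : ∀ z ∈ F, z ∈ Sell n S ℓ) (hD : ∀ z ∈ F, Adm n d r a c z (D z))
    (hx : ∀ z ∈ F, ∀ i ∈ D z, z i = x i) (hr : r ≤ 2 * L) :
    F.card ≤ Sun (d + n) (2 * L) := by
  classical
  by_contra hlt
  push Not at hlt
  have hinj : Set.InjOn D F := by
    intro u hu v hv huv
    funext i
    by_cases hi : i ∈ D u
    · rw [hx u hu i hi, hx v hv i (huv ▸ hi)]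
    · have h1 : u i = c i := by
        by_contra h; exact hi (((hD u hu).2.1 i).2 h)
      have h2 : v i = c i := by
        by_contra h; exact hi (huv ▸ ((hD v hv).2.1 i).2 h)
      rw [h1, h2]
  obtain ⟨G, hG, hGc, C, hC⟩ := sun_good (d + n) r (2 * L) hr (F.image D) (by
    intro A hA
    obtain ⟨z, hz, rfl⟩ := Finset.mem_image.1 hA
    exact (hD z hz).1) (by rwa [Finset.card_image_of_injOn hinj])
  set Q := F.filter (fun z => D z ∈ G) with hQ
  have hQF : ∀ z ∈ Q, z ∈ F := fun z hz => (Finset.mem_filter.1 hz).1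
  have hQG : Q.image D = G := by
    ext A
    constructor
    · intro hA
      obtain ⟨z, hz, rfl⟩ := Finset.mem_image.1 hA
      exact (Finset.mem_filter.1 hz).2
    · intro hA
      obtain ⟨z, hz, rfl⟩ := Finset.mem_image.1 (hG hA)
      exact Finset.mem_image_of_mem _ (Finset.mem_filter.2 ⟨hz, hA⟩)
  have hQc : d < Q.card := by
    have := Finset.card_image_le (s := Q) (f := D)
    rw [hQG, hGc] at this
    omega
  refine sun_contra n d ℓ r hn hd S hmax a b ha hb hfirst c x Q D (fun z hz => hF z (hQF z hz))
    (fun z hz => hD z (hQF z hz)) (fun z hz => hx z (hQF z hz)) C ?_ hQc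
  intro u hu v hv huv
  exact hC _ (Finset.mem_filter.1 hu).2 _ (Finset.mem_filter.1 hv).2
    (fun h => huv (hinj (hQF u hu) (hQF v hv) h))

lemma base_all (n d ℓ r L : ℕ) (hn : 2 ≤ n) (hd : 1 ≤ d) (S : Set (ℕ → Fin n))
    (hmax : IsDMaximal n d S)
    (a b : ℕ → Fin n) (ha : a ∈ S) (hb : b ∈ S)
    (hfirst : {i | a i ≠ b i} = Set.Iio d)
    (c : ℕ → Fin n) (F : Finset (ℕ → Fin n)) (D : (ℕ → Fin n) → Finset ℕ)
    (hF : ∀ z ∈ F, z ∈ Sell n S ℓ) (hD : ∀ z ∈ F, Adm n d r a c z (D z))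
    (hr : r ≤ 2 * L) :
    F.card ≤ n ^ r * Sun (d + n) (2 * L) := by
  classical
  set Z := Sun (d + n) (2 * L) with hZ
  set U := F.biUnion D with hU
  let R : (ℕ → Fin n) → (U → Fin n) → Prop := fun z g => ∀ i : U, (i : ℕ) ∈ D z → z i = g i
  have h1 : ∀ z ∈ F, n ^ U.card ≤ (Finset.univ.filter (fun g => R z g)).card * n ^ r := by
    intro z hz
    have hDU : D z ⊆ U := Finset.subset_biUnion_of_mem D hz
    have hsub : Fintype.piFinset (fun i : U => if (i : ℕ) ∈ D z then {z i} else Finset.univ) ⊆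
        Finset.univ.filter (fun g => R z g) := by
      intro g hg
      rw [Fintype.mem_piFinset] at hg
      refine Finset.mem_filter.2 ⟨Finset.mem_univ _, fun i hi => ?_⟩
      have := hg i
      rw [if_pos hi, Finset.mem_singleton] at this
      exact this.symm
    refine le_trans ?_ (Nat.mul_le_mul_right _ (Finset.card_le_card hsub))
    rw [Fintype.card_piFinset]
    have e1 : ∏ i : U, (if (i : ℕ) ∈ D z then ({z i} : Finset (Fin n)) else Finset.univ).card
        = ∏ i ∈ U, (if i ∈ D z then 1 else n) := by
      rw [← Finset.prod_coe_sort U]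
      refine Finset.prod_congr rfl fun i _ => ?_
      split_ifs <;> simp
    have e2 : n ^ r = ∏ i ∈ U, (if i ∈ D z then n else 1) := by
      rw [← (hD z hz).1, ← Finset.prod_const, ← Finset.prod_filter]
      congr 1
      ext i
      simp only [Finset.mem_filter]
      exact ⟨fun h => ⟨hDU h, h⟩, fun h => h.2⟩
    rw [e1, e2, ← Finset.prod_mul_distrib, ← Finset.prod_const]
    apply le_of_eq
    refine Finset.prod_congr rfl fun i _ => ?_
    split_ifs <;> simp
  have h2 : ∀ g : U → Fin n, (F.filter (fun z => R z g)).card ≤ Z := by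
    intro g
    refine base_fix n d ℓ r L hn hd S hmax a b ha hb hfirst c
      (fun i => if h : i ∈ U then g ⟨i, h⟩ else a i) _ D
      (fun z hz => hF z (Finset.mem_filter.1 hz).1) (fun z hz => hD z (Finset.mem_filter.1 hz).1)
      ?_ hr
    intro z hz i hi
    obtain ⟨hz1, hz2⟩ := Finset.mem_filter.1 hz
    have hiU : i ∈ U := Finset.subset_biUnion_of_mem D hz1 hi
    simp only [hiU, dif_pos]
    exact hz2 ⟨i, hiU⟩ hi
  have h3 : ∑ z ∈ F, (Finset.univ.filter (fun g => R z g)).card =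
      ∑ g : U → Fin n, (F.filter (fun z => R z g)).card :=
    Finset.sum_card_bipartiteAbove_eq_sum_card_bipartiteBelow R
  have h4 : F.card * n ^ U.card ≤ (n ^ r * Z) * n ^ U.card := by
    calc F.card * n ^ U.card = ∑ z ∈ F, n ^ U.card := by simp
      _ ≤ ∑ z ∈ F, (Finset.univ.filter (fun g => R z g)).card * n ^ r := Finset.sum_le_sum h1
      _ = (∑ g : U → Fin n, (F.filter (fun z => R z g)).card) * n ^ r := by
          rw [← Finset.sum_mul, h3]
      _ ≤ (∑ g : U → Fin n, Z) * n ^ r := by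
          gcongr with g _
          exact h2 g
      _ = _ := by simp; ring
  exact Nat.le_of_mul_le_mul_right h4 (by positivity)

lemma step_lem (n d ℓ r L : ℕ) (hn : 2 ≤ n) (S : Set (ℕ → Fin n))
    (hmax : IsDMaximal n d S) (hball : ¬ ContainsBall n S (L + 1))
    (a b : ℕ → Fin n) (ha : a ∈ S) (hb : b ∈ S)
    (hfirst : {i | a i ≠ b i} = Set.Iio d) (M : ℝ) (hM0 : 0 ≤ M)
    (hM : ∀ (c : ℕ → Fin n) (F : Finset (ℕ → Fin n)) (D : (ℕ → Fin n) → Finset ℕ),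
      (∀ z ∈ F, z ∈ Sell n S ℓ) → (∀ z ∈ F, Adm n d r a c z (D z)) → (F.card : ℝ) ≤ M)
    (c : ℕ → Fin n) (F : Finset (ℕ → Fin n)) (D : (ℕ → Fin n) → Finset ℕ)
    (hF : ∀ z ∈ F, z ∈ Sell n S ℓ) (hD : ∀ z ∈ F, Adm n d (r + 1) a c z (D z)) :
    ((r : ℝ) + 1 - L) * F.card ≤ d * (n / 2) * M := by
  classical
  obtain ⟨hS, -, hmx⟩ := hmax
  obtain ⟨s, hs, hcs⟩ : ∃ s ∈ S, (d : ℕ∞) ≤ hDist n c s + L := by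
    by_contra hcon
    push Not at hcon
    apply hball
    refine ⟨c, fun y hy => hmx y fun s hs => ?_⟩
    have hy : {i | y i ≠ c i}.encard ≤ ((L + 1 : ℕ) : ℕ∞) := hy
    have h1 := hcon s hs
    have h2 : hDist n y s ≤ ((L + 1 : ℕ) : ℕ∞) + hDist n c s := by
      unfold hDist
      refine le_trans (Set.encard_le_encard (t := {i | y i ≠ c i} ∪ {i | c i ≠ s i}) ?_) ?_
      · intro i hi
        by_contra h
        simp only [Set.mem_union, Set.mem_ofPred_eq, not_or, not_not] at h
        exact hi (h.1.trans h.2)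
      · refine (Set.encard_union_le _ _).trans ?_
        gcongr
    refine h2.trans ?_
    generalize hDist n c s = t at h1
    have ht : t ≠ ⊤ := by
      rintro rfl
      simp at h1
    lift t to ℕ using ht
    norm_cast at h1 ⊢
    omega
  obtain ⟨B, hB, -, -, hB2⟩ := tail2 n d S hS a b ha hb hfirst s hs
  -- weight inequality
  have hW : ∀ z ∈ F, r + 1 ≤ L + (B.filter (fun i => i ∈ D z)).card +
      (B.filter (fun i => i ∈ D z ∧ z i = s i)).card := by
    intro z hz
    obtain ⟨hD1, hD2, hD3⟩ := hD z hz
    have hsplit : ∀ y : ℕ → Fin n, hDist n y s =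
        {i | i ∉ D z ∧ y i ≠ s i}.encard + (((D z).filter (fun i => y i ≠ s i)).card : ℕ∞) := by
      intro y
      unfold hDist
      rw [← Set.encard_coe_eq_coe_finsetCard, ← Set.encard_union_eq]
      · congr 1
        ext i
        simp only [Set.mem_union, Set.mem_ofPred_eq, Finset.coe_filter]
        tauto
      · rw [Set.disjoint_left]
        intro i hi hi2
        exact hi.1 (Finset.mem_filter.1 (Finset.mem_coe.1 hi2)).1
    have heq : {i | i ∉ D z ∧ z i ≠ s i} = {i | i ∉ D z ∧ c i ≠ s i} := by
      ext i
      simp only [Set.mem_ofPred_eq]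
      refine and_congr_right fun hi => ?_
      have : z i = c i := by
        by_contra h; exact hi ((hD2 i).2 h)
      rw [this]
    have h1 := hS z (hF z hz).1 s hs
    rw [hsplit z, heq] at h1
    rw [hsplit c] at hcs
    generalize {i | i ∉ D z ∧ c i ≠ s i}.encard = t at h1 hcs
    have ht : t ≠ ⊤ := by
      rintro rfl
      simp at h1
    lift t to ℕ using ht
    norm_cast at h1 hcs
    have h2 : (D z).filter (fun i => c i ≠ s i) ⊆ B.filter (fun i => i ∈ D z) := by
      intro i hi
      obtain ⟨h3, h4⟩ := Finset.mem_filter.1 hi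
      refine Finset.mem_filter.2 ⟨(hB i).2 ⟨(hD3 i h3).2, ?_⟩, h3⟩
      rw [← (hD3 i h3).1]; exact h4.symm
    have h3 : (D z).filter (fun i => ¬ z i ≠ s i) ⊆ B.filter (fun i => i ∈ D z ∧ z i = s i) := by
      intro i hi
      obtain ⟨h3, h4⟩ := Finset.mem_filter.1 hi
      rw [not_not] at h4
      refine Finset.mem_filter.2 ⟨(hB i).2 ⟨(hD3 i h3).2, ?_⟩, h3, h4⟩
      rw [← (hD3 i h3).1, ← h4]; exact (hD2 i).1 h3
    have h4 := Finset.card_le_card h2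
    have h5 := Finset.card_le_card h3
    have h6 := Finset.card_filter_add_card_filter_not (s := D z) (fun i => z i ≠ s i)
    rw [hD1] at h6
    simp only [ne_eq] at h1 hcs h4 h5 h6
    omega
  -- sub-bounds
  have hsub : ∀ i : ℕ, ∀ x : Fin n, ((F.filter (fun z => i ∈ D z ∧ z i = x)).card : ℝ) ≤ M := by
    intro i x
    apply hM (Function.update c i x) _ (fun z => (D z).erase i)
    · intro z hz
      exact hF z (Finset.mem_filter.1 hz).1
    · intro z hz
      obtain ⟨h1, h2, h3⟩ := Finset.mem_filter.1 hz
      obtain ⟨hD1, hD2, hD3⟩ := hD z h1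
      refine ⟨by rw [Finset.card_erase_of_mem h2, hD1]; rfl, ?_, ?_⟩
      · intro j
        by_cases hj : j = i
        · subst hj; simp [h3]
        · simp [hj, hD2 j]
      · intro j hj
        obtain ⟨hj1, hj2⟩ := Finset.mem_erase.1 hj
        rw [Function.update_of_ne hj1]
        exact hD3 j hj2
  have hsub2 : ∀ i : ℕ, ((F.filter (fun z => i ∈ D z)).card : ℝ) ≤ ((n : ℝ) - 1) * M := by
    intro i
    have h1 := Finset.card_eq_sum_card_fiberwise (f := fun z : ℕ → Fin n => z i)
      (s := F.filter (fun z => i ∈ D z)) (t := Finset.univ.erase (a i)) (by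
        intro z hz
        obtain ⟨h1, h2⟩ := Finset.mem_filter.1 (Finset.mem_coe.1 hz)
        obtain ⟨hD1, hD2, hD3⟩ := hD z h1
        refine Finset.mem_coe.2 (Finset.mem_erase.2 ⟨?_, Finset.mem_univ _⟩)
        rw [← (hD3 i h2).1]; exact (hD2 i).1 h2)
    rw [h1]
    push_cast
    refine (Finset.sum_le_card_nsmul _ _ M ?_).trans ?_
    · intro x _
      rw [Finset.filter_filter]
      exact hsub i x
    · rw [Finset.card_erase_of_mem (Finset.mem_univ _), Finset.card_univ, Fintype.card_fin,
        nsmul_eq_mul, Nat.cast_sub (by omega)]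
      simp
  have e1 : ∑ z ∈ F, (B.filter (fun i => i ∈ D z)).card =
      ∑ i ∈ B, (F.filter (fun z => i ∈ D z)).card :=
    Finset.sum_card_bipartiteAbove_eq_sum_card_bipartiteBelow (fun z i => i ∈ D z)
  have e2 : ∑ z ∈ F, (B.filter (fun i => i ∈ D z ∧ z i = s i)).card =
      ∑ i ∈ B, (F.filter (fun z => i ∈ D z ∧ z i = s i)).card :=
    Finset.sum_card_bipartiteAbove_eq_sum_card_bipartiteBelow (fun z i => i ∈ D z ∧ z i = s i)
  have e3 : F.card * (r + 1) ≤ F.card * L + ∑ i ∈ B, (F.filter (fun z => i ∈ D z)).card +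
      ∑ i ∈ B, (F.filter (fun z => i ∈ D z ∧ z i = s i)).card := by
    rw [← e1, ← e2, ← smul_eq_mul, ← smul_eq_mul, ← Finset.sum_const, ← Finset.sum_const,
      ← Finset.sum_add_distrib, ← Finset.sum_add_distrib]
    exact Finset.sum_le_sum hW
  have e4 : ((∑ i ∈ B, (F.filter (fun z => i ∈ D z)).card : ℕ) : ℝ) ≤ B.card * (((n : ℝ) - 1) * M) := by
    push_cast
    rw [← nsmul_eq_mul]
    exact Finset.sum_le_card_nsmul _ _ _ (fun i _ => hsub2 i)
  have e5 : ((∑ i ∈ B, (F.filter (fun z => i ∈ D z ∧ z i = s i)).card : ℕ) : ℝ) ≤ B.card * M := by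
    push_cast
    rw [← nsmul_eq_mul]
    exact Finset.sum_le_card_nsmul _ _ _ (fun i _ => hsub i (s i))
  have e6 : (F.card : ℝ) * (r + 1) ≤ F.card * L +
    ((∑ i ∈ B, (F.filter (fun z => i ∈ D z)).card : ℕ) : ℝ) +
      ((∑ i ∈ B, (F.filter (fun z => i ∈ D z ∧ z i = s i)).card : ℕ) : ℝ) := by
    exact_mod_cast e3
  have e7 : (2 : ℝ) * B.card ≤ d := by exact_mod_cast hB2
  have e8 : (2 * (B.card : ℝ)) * (n * M) ≤ d * (n * M) := by gcongr
  nlinarith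

lemma rec_lem (n d ℓ L : ℕ) (hn : 2 ≤ n) (hd : 1 ≤ d) (S : Set (ℕ → Fin n))
    (hmax : IsDMaximal n d S) (hball : ¬ ContainsBall n S (L + 1))
    (a b : ℕ → Fin n) (ha : a ∈ S) (hb : b ∈ S)
    (hfirst : {i | a i ≠ b i} = Set.Iio d) (j : ℕ) :
    ∀ (c : ℕ → Fin n) (F : Finset (ℕ → Fin n)) (D : (ℕ → Fin n) → Finset ℕ),
      (∀ z ∈ F, z ∈ Sell n S ℓ) → (∀ z ∈ F, Adm n d (2 * L + j) a c z (D z)) →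
      (F.card : ℝ) ≤ Sun (d + n) (2 * L) * ((n : ℝ) / 2) ^ (2 * L + j) *
        (4 ^ L * d ^ j * L.factorial / (L + j).factorial) := by
  induction j with
  | zero =>
    intro c F D hF hD
    have h := base_all n d ℓ (2 * L) L hn hd S hmax a b ha hb hfirst c F D hF hD le_rfl
    have h' : (F.card : ℝ) ≤ n ^ (2 * L) * Sun (d + n) (2 * L) := by exact_mod_cast h
    refine h'.trans (le_of_eq ?_)
    have : (L.factorial : ℝ) ≠ 0 := by positivity
    have h4 : (4 : ℝ) ^ L = 2 ^ (2 * L) := by rw [pow_mul]; norm_num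
    simp only [add_zero, pow_zero, mul_one]
    rw [h4, div_pow]
    field_simp
  | succ j ih =>
    intro c F D hF hD
    have h := step_lem n d ℓ (2 * L + j) L hn S hmax hball a b ha hb hfirst _ (by positivity)
      ih c F D hF hD
    have hp : (0 : ℝ) < L + j + 1 := by positivity
    have h2 : ((L : ℝ) + j + 1) * F.card ≤ d * (n / 2) * (Sun (d + n) (2 * L) *
      ((n : ℝ) / 2) ^ (2 * L + j) * (4 ^ L * d ^ j * L.factorial / (L + j).factorial)) := by
      refine le_trans (le_of_eq ?_) h
      push_cast; ring
    rw [mul_comm, ← le_div_iff₀ hp] at h2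
    refine h2.trans (le_of_eq ?_)
    rw [← add_assoc L j 1, Nat.factorial_succ]
    push_cast
    have : ((L + j).factorial : ℝ) ≠ 0 := by positivity
    field_simp
    ring

lemma arith1 (d L j : ℕ) (hL : 2 * L ≤ d) (hr : 2 * (2 * L + j) ≤ d) :
    4 ^ L * d ^ j * L.factorial ≤ (L + j).factorial * (d + (2 * L + j)).choose (2 * L + j) := by
  set r := 2 * L + j with hrd
  have h1 : r.factorial * (d + r).choose r = (d + 1).ascFactorial r := by
    rw [Nat.ascFactorial_eq_factorial_mul_choose]
  have h2 : d ^ r ≤ (d + 1).ascFactorial r :=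
    (Nat.pow_le_pow_left (Nat.le_succ d) r).trans (Nat.pow_succ_le_ascFactorial (d + 1) r)
  have h3 : r.factorial ≤ (L + j).factorial * r ^ L := by
    have := Nat.factorial_mul_pow_sub_le_factorial (n := L + j) (m := r) (by omega)
    have h5 := Nat.factorial_mul_descFactorial (n := r) (k := L) (by omega)
    rw [← h5, show r - L = L + j by omega]
    gcongr
    exact Nat.descFactorial_le_pow _ _
  have h4 : L.factorial ≤ L ^ L := Nat.factorial_le_pow L
  have hpos : 0 < r.factorial := Nat.factorial_pos _
  apply Nat.le_of_mul_le_mul_right _ hpos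
  calc 4 ^ L * d ^ j * L.factorial * r.factorial
      ≤ 4 ^ L * d ^ j * L ^ L * ((L + j).factorial * r ^ L) := by gcongr
    _ = (L + j).factorial * (((2 * L) * (2 * r)) ^ L * d ^ j) := by
        rw [show (2 * L) * (2 * r) = 4 * L * r by ring, mul_pow, mul_pow]; ring
    _ ≤ (L + j).factorial * ((d * d) ^ L * d ^ j) := by gcongr
    _ = (L + j).factorial * d ^ r := by rw [hrd, pow_add, pow_mul, sq]
    _ ≤ (L + j).factorial * (r.factorial * (d + r).choose r) := by rw [h1]; gcongr
    _ = _ := by ring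

lemma arith2 (d k : ℕ) (hk : k ≤ d) : 2 ^ k ≤ (d + k).choose k := by
  induction k with
  | zero => simp
  | succ k ih =>
    have h1 := ih (by omega)
    have h2 := Nat.add_one_mul_choose_eq (d + k) k
    have h3 : (k + 1) * 2 ^ (k + 1) ≤ (k + 1) * (d + (k + 1)).choose (k + 1) := by
      calc (k + 1) * 2 ^ (k + 1) = (2 * (k + 1)) * 2 ^ k := by ring
        _ ≤ (d + k + 1) * (d + k).choose k := by gcongr; omega
        _ = _ := by rw [h2]; ring_nf
    exact Nat.le_of_mul_le_mul_left h3 (by omega)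

lemma level_bound (n d ℓ L : ℕ) (hn : 2 ≤ n) (hd : 1 ≤ d) (hL : 2 * L ≤ d) (S : Set (ℕ → Fin n))
    (hmax : IsDMaximal n d S) (hball : ¬ ContainsBall n S (L + 1))
    (a b : ℕ → Fin n) (ha : a ∈ S) (hb : b ∈ S)
    (hfirst : {i | a i ≠ b i} = Set.Iio d) (k : ℕ) (hk : 2 * k ≤ d)
    (c : ℕ → Fin n) (F : Finset (ℕ → Fin n)) (D : (ℕ → Fin n) → Finset ℕ)
    (hF : ∀ z ∈ F, z ∈ Sell n S ℓ) (hD : ∀ z ∈ F, Adm n d k a c z (D z)) :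
    (F.card : ℝ) ≤ Sun (d + n) (2 * L) * ((n : ℝ) / 2) ^ k * ((d + k).choose k : ℝ) := by
  by_cases h : k ≤ 2 * L
  · have h1 := base_all n d ℓ k L hn hd S hmax a b ha hb hfirst c F D hF hD h
    have h1' : (F.card : ℝ) ≤ n ^ k * Sun (d + n) (2 * L) := by exact_mod_cast h1
    have h2 : (2 : ℝ) ^ k ≤ ((d + k).choose k : ℝ) := by exact_mod_cast arith2 d k (by omega)
    calc (F.card : ℝ) ≤ n ^ k * Sun (d + n) (2 * L) := h1'
      _ = Sun (d + n) (2 * L) * ((n : ℝ) / 2) ^ k * 2 ^ k := by rw [div_pow]; field_simp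
      _ ≤ _ := by gcongr
  · obtain ⟨j, rfl⟩ := Nat.exists_eq_add_of_le (by omega : 2 * L ≤ k)
    refine (rec_lem n d ℓ L hn hd S hmax hball a b ha hb hfirst j c F D hF hD).trans ?_
    gcongr
    rw [div_le_iff₀ (by positivity), mul_comm (((d + (2 * L + j)).choose (2 * L + j) : ℕ) : ℝ)]
    exact_mod_cast arith1 d L j hL hk

lemma fin_bound (n d L : ℕ) (hn : 2 ≤ n) (hd : 1 ≤ d) (hL : 2 * L ≤ d)
    (S : Set (ℕ → Fin n)) (hmax : IsDMaximal n d S) (hball : ¬ ContainsBall n S (L + 1))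
    (ℓ : ℕ)
    (a b : ℕ → Fin n) (ha : a ∈ S) (hb : b ∈ S)
    (hfirst : {i | a i ≠ b i} = Set.Iio d)
    (p : Fin d → Fin n)
    (mp : ℕ)
    (hmp : mp = max (hammingDist (fun i : Fin d => a i) p)
                    (hammingDist (fun i : Fin d => b i) p))
    (F : Finset (ℕ → Fin n)) (hF : ∀ z ∈ F, z ∈ Sell n S ℓ ∧ ∀ i : Fin d, z i = p i) :
    (F.card : ℝ) ≤ (d : ℝ) * (Sun (d + n) (2 * L) : ℝ) * ((n : ℝ) / 2) ^ (d - mp) *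
          ((2 * d - mp).choose (d - mp) : ℝ) := by
  classical
  have hex : ∀ z ∈ F, ∃ B : Finset ℕ, (∀ i, i ∈ B ↔ d ≤ i ∧ z i ≠ a i) ∧
      B.card + mp ≤ d ∧ 2 * B.card ≤ d := by
    intro z hz
    obtain ⟨B, h1, h2, h3, h4⟩ := tail2 n d S hmax.1 a b ha hb hfirst z (hF z hz).1.1
    have : (fun i : Fin d => z i) = p := funext (hF z hz).2
    rw [this] at h2 h3
    exact ⟨B, h1, by omega, h4⟩
  choose! D hD1 hD2 hD3 using hex
  by_cases hne : F = ∅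
  · subst hne
    simp only [Finset.card_empty, Nat.cast_zero]
    positivity
  obtain ⟨z0, hz0⟩ := Finset.nonempty_iff_ne_empty.2 hne
  have hmd : mp ≤ d := by have := hD2 z0 hz0; omega
  have hm1 : 1 ≤ mp := by
    by_contra h
    have h0 : hammingDist (fun i : Fin d => a i) p = 0 := by omega
    have h0' : hammingDist (fun i : Fin d => b i) p = 0 := by omega
    rw [hammingDist_eq_zero] at h0 h0'
    have h1 := congrFun (h0.trans h0'.symm) ⟨0, hd⟩
    have h2 : (0 : ℕ) ∈ {i | a i ≠ b i} := by rw [hfirst]; exact hd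
    exact h2 h1
  set c : ℕ → Fin n := fun i => if h : i < d then p ⟨i, h⟩ else a i with hc
  have hadm : ∀ z ∈ F, Adm n d (D z).card a c z (D z) := by
    intro z hz
    refine ⟨rfl, ?_, ?_⟩
    · intro i
      rw [hD1 z hz]
      by_cases h : i < d
      · have := (hF z hz).2 ⟨i, h⟩
        simp only at this
        simp [hc, h, this]
      · simp [hc, h]; omega
    · intro i hi
      have h1 := ((hD1 z hz i).1 hi).1
      have h2 : ¬ i < d := by omega
      exact ⟨by simp [hc, h2], h1⟩
  have hlev : ∀ k ∈ Finset.range (d - mp + 1),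
      (((F.filter (fun z => (D z).card = k)).card : ℕ) : ℝ) ≤
      Sun (d + n) (2 * L) * ((n : ℝ) / 2) ^ (d - mp) * ((2 * d - mp).choose (d - mp) : ℝ) := by
    intro k hk
    have hk' : k ≤ d - mp := by have := Finset.mem_range.1 hk; omega
    by_cases h : 2 * k ≤ d
    · refine (level_bound n d ℓ L hn hd hL S hmax hball a b ha hb hfirst k h c _ D ?_ ?_).trans ?_
      · intro z hz
        exact (hF z (Finset.mem_filter.1 hz).1).1
      · intro z hz
        obtain ⟨h1, h2⟩ := Finset.mem_filter.1 hz
        have := hadm z h1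
        rwa [h2] at this
      · have hn2 : (1 : ℝ) ≤ (n : ℝ) / 2 := by
          rw [le_div_iff₀ (by norm_num)]
          have : (2 : ℝ) ≤ n := by exact_mod_cast hn
          linarith
        have h5 : (d + k).choose k ≤ (2 * d - mp).choose (d - mp) := by
          rw [show 2 * d - mp = d + (d - mp) by omega, Nat.choose_symm_add.symm,
            Nat.choose_symm_add.symm]
          exact Nat.choose_le_choose _ (by omega)
        gcongr
    · have : F.filter (fun z => (D z).card = k) = ∅ := by
        apply Finset.filter_eq_empty_iff.2
        intro z hz h1
        have := hD3 z hz
        omega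
      rw [this]
      simp only [Finset.card_empty, Nat.cast_zero]
      positivity
  have hsum := Finset.card_eq_sum_card_fiberwise (f := fun z => (D z).card) (s := F)
    (t := Finset.range (d - mp + 1)) (by
      intro z hz
      have := hD2 z hz
      refine Finset.mem_coe.2 (Finset.mem_range.2 ?_)
      show (D z).card < _
      omega)
  rw [hsum]
  push_cast
  refine (Finset.sum_le_card_nsmul _ _ _ hlev).trans ?_
  rw [Finset.card_range, nsmul_eq_mul, mul_assoc (d : ℝ), mul_assoc (d : ℝ)]
  gcongr
  omega

theorem stmt14 (n d L : ℕ) (hn : 2 ≤ n) (hd : 1 ≤ d) (hL : 2 * L ≤ d)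
    (S : Set (ℕ → Fin n)) (hmax : IsDMaximal n d S) (hball : ¬ ContainsBall n S (L + 1))
    (ℓ : ℕ)
    (a b : ℕ → Fin n) (ha : a ∈ S) (hb : b ∈ S) (hab : hDist n a b = (d : ℕ∞))
    (hfirst : {i | a i ≠ b i} = Set.Iio d)
    (p : Fin d → Fin n)
    (mp : ℕ)
    (hmp : mp = max (hammingDist (fun i : Fin d => a i) p)
                    (hammingDist (fun i : Fin d => b i) p)) :
    {z ∈ Sell n S ℓ | ∀ i : Fin d, z i = p i}.Finite ∧
      (({z ∈ Sell n S ℓ | ∀ i : Fin d, z i = p i}.ncard : ℝ) ≤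
        (d : ℝ) * (Sun (d + n) (2 * L) : ℝ) * ((n : ℝ) / 2) ^ (d - mp) *
          ((2 * d - mp).choose (d - mp) : ℝ)) := by
  have key := fin_bound n d L hn hd hL S hmax hball ℓ a b ha hb hfirst p mp hmp
  have hfin : {z ∈ Sell n S ℓ | ∀ i : Fin d, z i = p i}.Finite := by
    by_contra hinf
    obtain ⟨N, hN⟩ := exists_nat_gt ((d : ℝ) * (Sun (d + n) (2 * L) : ℝ) *
      ((n : ℝ) / 2) ^ (d - mp) * ((2 * d - mp).choose (d - mp) : ℝ))
    obtain ⟨F, hF, hFc⟩ := Set.Infinite.exists_subset_card_eq hinf N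
    have := key F (fun z hz => hF hz)
    rw [hFc] at this
    linarith
  refine ⟨hfin, ?_⟩
  rw [Set.ncard_eq_toFinset_card _ hfin]
  exact key _ (fun z hz => hfin.mem_toFinset.1 hz)
end

section
/- Let k ≥ 1 be an integer and let S_even = {∅} ∪ {A ⊆ {1, …, 3k} : |A| = 2k}, viewed as a family of subsets of ℕ with distance dist(A,B) = |A Δ B| (the cardinality of the symmetric difference, possibly infinite). Then S_even has diameter 2k and is 2k-maximal: for every B ⊆ ℕ, if |B Δ A| ≤ 2k for all A ∈ S_even, then B ∈ S_even. In particular |S_even| = 1 + binom(3k, 2k). -/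
/-- Hamming distance between subsets of `ℕ`: the (possibly infinite) cardinality
of their symmetric difference. -/
noncomputable def setDist (A B : Set ℕ) : ℕ∞ := (symmDiff A B).encard

/-- The family `S_even = {∅} ∪ {A ⊆ {1,…,3k} : |A| = 2k}`. -/
def Seven (k : ℕ) : Set (Set ℕ) :=
  {∅} ∪ {A : Set ℕ | A ⊆ Set.Icc 1 (3 * k) ∧ A.ncard = 2 * k}

theorem seven_eq (k : ℕ) : Seven k =
    (fun s : Finset ℕ => (s : Set ℕ)) '' ((insert ∅ (Finset.powersetCard (2 * k) (Finset.Icc 1 (3 * k))) : Finset (Finset ℕ)) : Set (Finset ℕ)) := by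
  ext A
  simp only [Seven, Set.mem_union, Set.mem_singleton_iff, Set.mem_ofPred_eq, Set.mem_image,
    Finset.mem_coe, Finset.mem_insert, Finset.mem_powersetCard]
  constructor
  · rintro (rfl | ⟨h1, h2⟩)
    · exact ⟨∅, Or.inl rfl, by simp⟩
    · have hf : A.Finite := (Set.finite_Icc 1 (3 * k)).subset h1
      lift A to Finset ℕ using hf
      refine ⟨A, Or.inr ⟨?_, ?_⟩, rfl⟩
      · rw [← Finset.coe_subset]; simpa using h1
      · simpa using h2
  · rintro ⟨s, (rfl | ⟨h1, h2⟩), rfl⟩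
    · left; simp
    · right
      refine ⟨?_, by simpa using h2⟩
      rw [← Finset.coe_subset] at h1; simpa using h1

theorem setDist_coe (a b : Finset ℕ) : setDist (a : Set ℕ) b = ((symmDiff a b).card : ℕ∞) := by
  rw [setDist, ← Finset.coe_symmDiff, Set.encard_coe_eq_coe_finsetCard]

theorem card_sd (a b : Finset ℕ) : (symmDiff a b).card + 2 * (a ∩ b).card = a.card + b.card := by
  have h : (symmDiff a b).card = (a \ b).card + (b \ a).card := by
    rw [symmDiff_def, Finset.sup_eq_union, Finset.card_union_of_disjoint disjoint_sdiff_sdiff]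
  have h1 := Finset.card_sdiff_add_card_inter a b
  have h2 := Finset.card_sdiff_add_card_inter b a
  rw [Finset.inter_comm b a] at h2
  omega

theorem stmt15 (k : ℕ) (hk : 1 ≤ k) :
    (∀ A ∈ Seven k, ∀ B ∈ Seven k, setDist A B ≤ ((2 * k : ℕ) : ℕ∞)) ∧
    (∃ A ∈ Seven k, ∃ B ∈ Seven k, setDist A B = ((2 * k : ℕ) : ℕ∞)) ∧
    (∀ B : Set ℕ, (∀ A ∈ Seven k, setDist B A ≤ ((2 * k : ℕ) : ℕ∞)) → B ∈ Seven k) ∧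
    (Seven k).ncard = 1 + (3 * k).choose (2 * k) := by
  have hU : (Finset.Icc 1 (3 * k)).card = 3 * k := by simp
  rw [seven_eq]
  generalize Finset.Icc 1 (3 * k) = U at hU
  simp only [Set.forall_mem_image, Set.exists_mem_image, Finset.mem_coe, setDist_coe, Nat.cast_le,
    Nat.cast_inj]
  simp only [Finset.mem_insert, Finset.mem_powersetCard]
  refine ⟨?_, ?_, ?_, ?_⟩
  · intro a ha b hb
    have h := card_sd a b
    rcases ha with rfl | ⟨ha, ha'⟩
    · rcases hb with rfl | ⟨hb, hb'⟩ <;> simp at h ⊢ <;> omega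
    · rcases hb with rfl | ⟨hb, hb'⟩
      · simp at h ⊢; omega
      · have h1 := Finset.card_union_add_card_inter a b
        have h2 := Finset.card_le_card (Finset.union_subset ha hb)
        omega
  · obtain ⟨a, ha, ha'⟩ := Finset.exists_subset_card_eq (s := U) (n := 2 * k) (by omega)
    refine ⟨∅, Or.inl rfl, a, Or.inr ⟨ha, ha'⟩, ?_⟩
    have h := card_sd ∅ a
    simp at h ⊢; omega
  · intro B hB
    have h0 := hB (Or.inl rfl)
    have hf : B.Finite := by
      have : setDist B ((∅ : Finset ℕ) : Set ℕ) = B.encard := by simp [setDist, Set.symmDiff_def]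
      rw [this] at h0
      exact Set.finite_of_encard_le_coe h0
    lift B to Finset ℕ using hf
    simp only [setDist_coe, Nat.cast_le] at hB h0
    refine ⟨B, ?_, rfl⟩
    simp only [Finset.coe_insert, Set.mem_insert_iff, Finset.mem_coe, Finset.mem_powersetCard]
    have e0 := card_sd B ∅
    simp only [Finset.inter_empty, Finset.card_empty] at e0
    have e1 := Finset.card_sdiff_add_card_inter U B
    have e2 := Finset.card_sdiff_add_card_inter B U
    have e3 : (U ∩ B).card = (B ∩ U).card := by rw [Finset.inter_comm]
    by_cases hc : (B ∩ U).card ≤ k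
    · left
      obtain ⟨a, ha, ha'⟩ := Finset.exists_subset_card_eq (s := U \ B) (n := 2 * k) (by omega)
      have h1 := hB (Or.inr ⟨ha.trans Finset.sdiff_subset, ha'⟩)
      have h2 := card_sd B a
      have h3 : B ∩ a = ∅ := by
        ext x; simp only [Finset.mem_inter, Finset.notMem_empty, iff_false]
        rintro ⟨hx, hy⟩
        exact (Finset.mem_sdiff.1 (ha hy)).2 hx
      rw [h3, Finset.card_empty] at h2
      exact Finset.card_eq_zero.1 (by omega)
    · right
      obtain ⟨a, ha, ha1, ha'⟩ := Finset.exists_subsuperset_card_eq (s := U \ B) (t := U) (n := 2 * k)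
        Finset.sdiff_subset (by omega) (by omega)
      have h1 := hB (Or.inr ⟨ha1, ha'⟩)
      have h2 := card_sd B a
      have h3 : a \ B = U \ B := by
        apply Finset.Subset.antisymm
        · exact Finset.sdiff_subset_sdiff ha1 (Finset.Subset.refl _)
        · intro x hx
          exact Finset.mem_sdiff.2 ⟨ha hx, (Finset.mem_sdiff.1 hx).2⟩
      have h4 := Finset.card_sdiff_add_card_inter a B
      rw [h3, Finset.inter_comm] at h4
      refine ⟨?_, by omega⟩
      rw [← Finset.sdiff_eq_empty_iff_subset, ← Finset.card_eq_zero]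
      omega
  · rw [Set.ncard_image_of_injective _ Finset.coe_injective, Set.ncard_coe_finset,
      Finset.card_insert_of_notMem, Finset.card_powersetCard, hU, add_comm]
    simp only [Finset.mem_powersetCard, Finset.card_empty]
    omega
end

section
/- Let d ≥ 1 and k ≥ 0 be integers, let w ∈ [2]^∞, and let S ⊆ [2]^∞ satisfy dist(a,b) ≤ d for all a,b ∈ S. Suppose S_k = {a ∈ S : dist(a,w) = k} is finite and nonempty, let N = |S_k|, and for each coordinate i ∈ ℕ let c_i = |{a ∈ S_k : a_i ≠ w_i}| (only finitely many c_i are nonzero). Then ∑_i c_i = k·N and ∑_i c_i² ≥ (k − d/2)·N² (as real numbers). -/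
theorem stmt17 (d k : ℕ) (hd : 1 ≤ d) (w : ℕ → Fin 2) (S : Set (ℕ → Fin 2))
    (hdiam : ∀ a ∈ S, ∀ b ∈ S, hDist 2 a b ≤ (d : ℕ∞))
    (Sk : Set (ℕ → Fin 2)) (hSk : Sk = {a ∈ S | hDist 2 a w = (k : ℕ∞)})
    (hfin : Sk.Finite) (hne : Sk.Nonempty)
    (N : ℕ) (hN : N = Sk.ncard)
    (c : ℕ → ℕ) (hc : ∀ i, c i = {a ∈ Sk | a i ≠ w i}.ncard) :
    (∑ᶠ i, c i = k * N) ∧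
      ((k : ℝ) - (d : ℝ) / 2) * (N : ℝ) ^ 2 ≤ ∑ᶠ i, ((c i : ℝ)) ^ 2 := by
  classical
  have hmem : ∀ a, a ∈ hfin.toFinset ↔ a ∈ S ∧ hDist 2 a w = (k : ℕ∞) := by
    intro a
    rw [Set.Finite.mem_toFinset, hSk]
    rfl
  have hNF : N = hfin.toFinset.card := by
    rw [hN, Set.ncard_eq_toFinset_card _ hfin]
  have hcF : ∀ i, c i = ∑ a ∈ hfin.toFinset, if a i ≠ w i then 1 else 0 := by
    intro i
    rw [hc, ← Finset.card_filter, ← Set.ncard_coe_finset]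
    congr 1
    ext a
    simp
  generalize hfin.toFinset = F at hmem hNF hcF
  have hD : ∀ a ∈ F, {i | a i ≠ w i}.Finite := by
    intro a ha
    have h := ((hmem a).1 ha).2
    apply Set.finite_of_encard_eq_coe (k := k)
    exact h
  have hTfin : (⋃ a ∈ F, {i | a i ≠ w i}).Finite :=
    Set.Finite.biUnion F.finite_toSet hD
  obtain ⟨T, hT⟩ : ∃ T : Finset ℕ, ∀ a ∈ F, ∀ i, a i ≠ w i → i ∈ T := by
    refine ⟨hTfin.toFinset, fun a ha i hi => ?_⟩
    rw [Set.Finite.mem_toFinset]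
    exact Set.mem_biUnion ha hi
  have hk : ∀ a ∈ F, (∑ i ∈ T, if a i ≠ w i then 1 else 0) = k := by
    intro a ha
    have h := ((hmem a).1 ha).2
    have e : {i | a i ≠ w i} = ((T.filter fun i => a i ≠ w i : Finset ℕ) : Set ℕ) := by
      ext i
      simp only [Set.mem_setOf_eq, Finset.coe_filter]
      exact ⟨fun hi => ⟨hT a ha i hi, hi⟩, fun hi => hi.2⟩
    rw [hDist, e, Set.encard_coe_eq_coe_finsetCard] at h
    rw [← Finset.card_filter]
    exact_mod_cast h
  have hdd : ∀ a ∈ F, ∀ b ∈ F, (∑ i ∈ T, if a i ≠ b i then 1 else 0) ≤ d := by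
    intro a ha b hb
    have h := hdiam a ((hmem a).1 ha).1 b ((hmem b).1 hb).1
    have e : ((T.filter fun i => a i ≠ b i : Finset ℕ) : Set ℕ) ⊆ {i | a i ≠ b i} := by
      intro i hi
      simp only [Finset.coe_filter] at hi
      exact hi.2
    have h2 := (Set.encard_le_encard e).trans h
    rw [Set.encard_coe_eq_coe_finsetCard] at h2
    rw [← Finset.card_filter]
    exact_mod_cast h2
  have hc0 : ∀ i, c i ≠ 0 → i ∈ T := by
    intro i hi
    rw [hcF] at hi
    obtain ⟨a, ha, h⟩ := Finset.exists_ne_zero_of_sum_ne_zero hi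
    refine hT a ha i ?_
    intro h'
    simp [h'] at h
  constructor
  · rw [finsum_eq_sum_of_support_subset c (s := T) (fun i hi => hc0 i hi)]
    simp_rw [hcF]
    rw [Finset.sum_comm, Finset.sum_congr rfl hk, Finset.sum_const, hNF, smul_eq_mul, mul_comm]
  · rw [finsum_eq_sum_of_support_subset (s := T) _ (fun i hi => hc0 i (by
      intro h; simp [h] at hi))]
    have key : ∀ a ∈ F, ∀ b ∈ F, (k : ℝ) - (d : ℝ) / 2 ≤
        ∑ i ∈ T, (if a i ≠ w i then (1 : ℝ) else 0) * (if b i ≠ w i then 1 else 0) := by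
      intro a ha b hb
      have e : ∀ i ∈ T, (if a i ≠ w i then (1 : ℝ) else 0) * (if b i ≠ w i then 1 else 0)
          = ((if a i ≠ w i then (1 : ℝ) else 0) + (if b i ≠ w i then 1 else 0)
            - (if a i ≠ b i then 1 else 0)) / 2 := by
        intro i _
        generalize a i = x
        generalize b i = y
        generalize w i = z
        fin_cases x <;> fin_cases y <;> fin_cases z <;> norm_num
      rw [Finset.sum_congr rfl e, ← Finset.sum_div, Finset.sum_sub_distrib,
        Finset.sum_add_distrib]
      have h1 : (∑ i ∈ T, if a i ≠ w i then (1 : ℝ) else 0) = k := by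
        exact_mod_cast hk a ha
      have h2 : (∑ i ∈ T, if b i ≠ w i then (1 : ℝ) else 0) = k := by
        exact_mod_cast hk b hb
      have h3 : (∑ i ∈ T, if a i ≠ b i then (1 : ℝ) else 0) ≤ d := by
        exact_mod_cast hdd a ha b hb
      rw [h1, h2]
      linarith
    have e2 : ∑ i ∈ T, ((c i : ℝ)) ^ 2 = ∑ a ∈ F, ∑ b ∈ F,
        ∑ i ∈ T, (if a i ≠ w i then (1 : ℝ) else 0) * (if b i ≠ w i then 1 else 0) := by
      have : ∀ i ∈ T, ((c i : ℝ)) ^ 2 = ∑ a ∈ F, ∑ b ∈ F,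
          (if a i ≠ w i then (1 : ℝ) else 0) * (if b i ≠ w i then 1 else 0) := by
        intro i _
        rw [← Finset.sum_mul_sum, hcF, sq]
        push_cast
        rfl
      rw [Finset.sum_congr rfl this, Finset.sum_comm]
      exact Finset.sum_congr rfl fun a _ => Finset.sum_comm
    rw [e2]
    calc ((k : ℝ) - (d : ℝ) / 2) * (N : ℝ) ^ 2
        = ∑ a ∈ F, ∑ b ∈ F, ((k : ℝ) - (d : ℝ) / 2) := by
          simp only [Finset.sum_const, nsmul_eq_mul, hNF]
          ring
      _ ≤ _ := Finset.sum_le_sum fun a ha => Finset.sum_le_sum fun b hb => key a ha b hb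
end

section
/- Let d ≥ 1 be an integer, let S ⊆ [2]^∞ be a d-maximal set that contains no 1-ball, let w ∈ S, and let k be an integer with 0 ≤ k ≤ d such that S_k = {a ∈ S : dist(a,w) = k} is nonempty (S_k is finite since S is). Let N = |S_k|, c_i = |{a ∈ S_k : a_i ≠ w_i}|, let ℓ ≥ 1 be an integer, and suppose Δ := ∑_{i=1}^{ℓ} (c_i/N − 1/2) satisfies Δ ≥ 0. Then |S_k| ≤ binom(2d, k)·(1 + Δ/ℓ)^{−Δ} (as real numbers, with a real exponent). -/
open Finset in
theorem core18 (d k : ℕ) (hk : k ≤ d) (P : Set (Finset ℕ))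
    (h1 : ∀ A ∈ P, #A ≤ d) (h2 : ∀ A ∈ P, ∀ B ∈ P, #(symmDiff A B) ≤ d)
    (h3 : ∀ X : Finset ℕ, ∃ B ∈ P, d ≤ #(symmDiff X B)) :
    ∀ (K : ℕ) (x : Finset ℕ) (F : Finset (Finset ℕ)),
      (∀ A ∈ F, A ∈ P ∧ #A = k ∧ x ⊆ A) → #x + K = k → #F ≤ (2 * d - #x).choose K := by
  intro K
  induction K with
  | zero =>
    intro x F hF hx
    rw [Nat.choose_zero_right, Finset.card_le_one]
    have key : ∀ A ∈ F, A = x := by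
      intro A hA
      obtain ⟨_, hc, hs⟩ := hF A hA
      exact (Finset.eq_of_subset_of_card_le hs (by omega)).symm
    intro A hA B hB
    rw [key A hA, key B hB]
  | succ K ih =>
    intro x F hF hx
    obtain ⟨b, hb, hfar⟩ := h3 x
    have sd : ∀ A B : Finset ℕ, #(symmDiff A B) = #(A \ B) + #(B \ A) := by
      intro A B
      rw [symmDiff_def, Finset.sup_eq_union, Finset.card_union_of_disjoint]
      exact disjoint_sdiff_sdiff
    rw [sd] at hfar
    have hbd := h1 b hb
    have e1 := Finset.card_sdiff_add_card_inter x b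
    have e2 := Finset.card_sdiff_add_card_inter b x
    rw [Finset.inter_comm b x] at e2
    set m := #(b \ x) with hm
    set s := #(x \ b) with hs
    -- per-element inequality
    have hu : ∀ A ∈ F, (K + 1) * m ≤ #(A ∩ (b \ x)) * (2 * d - #x) ∧ 0 < m := by
      intro A hA
      obtain ⟨hAP, hc, hxA⟩ := hF A hA
      have hd := h2 A hAP b hb
      rw [sd] at hd
      have f1 : #(A ∩ (b \ x)) + #(b \ A) = m := by
        rw [hm, ← Finset.card_inter_add_card_sdiff (b \ x) A, Finset.inter_comm]
        congr 2
        ext i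
        simp only [Finset.mem_sdiff]
        have := @hxA i
        tauto
      have f2 : #(A \ b) + #(A ∩ b) = k := by
        rw [Finset.card_sdiff_add_card_inter, hc]
      have f3 : #(A ∩ b) = #(A ∩ (b \ x)) + #(x ∩ b) := by
        rw [← Finset.card_union_of_disjoint]
        · congr 1
          ext i
          simp only [Finset.mem_union, Finset.mem_inter, Finset.mem_sdiff]
          have := @hxA i
          tauto
        · rw [Finset.disjoint_left]
          intro i
          simp only [Finset.mem_inter, Finset.mem_sdiff]
          tauto
      set u := #(A ∩ (b \ x))
      have g1 : m + s + (K + 1) ≤ 2 * u + d := by omega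
      have g2 : #x ≤ 2 * s := by omega
      have g3 : d ≤ m + s := by omega
      constructor
      · have hsub : #x ≤ 2 * d := by omega
        zify [hsub] at *
        nlinarith [mul_nonneg (sub_nonneg.2 g3) (by linarith : (0:ℤ) ≤ 2 * d - #x - 2 * (K + 1)),
          mul_nonneg (by linarith : (0:ℤ) ≤ 2 * s - #x) (by positivity : (0:ℤ) ≤ (K:ℤ) + 1),
          mul_nonneg (sub_nonneg.2 g1) (by linarith : (0:ℤ) ≤ 2 * d - #x)]
      · omega
    rcases F.eq_empty_or_nonempty with rfl | ⟨A0, hA0⟩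
    · simp
    have hmpos := (hu A0 hA0).2
    have hsum : ∑ A ∈ F, #(A ∩ (b \ x)) ≤ m * (2 * d - #x - 1).choose K := by
      have : ∑ A ∈ F, #(A ∩ (b \ x)) = ∑ i ∈ b \ x, #(F.filter (fun A => i ∈ A)) := by
        have := Finset.sum_card_bipartiteAbove_eq_sum_card_bipartiteBelow
          (s := F) (t := b \ x) (fun (A : Finset ℕ) (i : ℕ) => i ∈ A)
        simp only [Finset.bipartiteAbove, Finset.bipartiteBelow] at this
        rw [← this]
        apply Finset.sum_congr rfl
        intro A _
        congr 1
        ext i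
        simp only [Finset.mem_inter, Finset.mem_filter]
        tauto
      rw [this, hm, ← smul_eq_mul]
      apply Finset.sum_le_card_nsmul
      intro i hi
      rw [Finset.mem_sdiff] at hi
      have hci : #(insert i x) = #x + 1 := Finset.card_insert_of_notMem hi.2
      have := ih (insert i x) (F.filter (fun A => i ∈ A)) (by
        intro A hA
        rw [Finset.mem_filter] at hA
        obtain ⟨q1, q2, q3⟩ := hF A hA.1
        exact ⟨q1, q2, Finset.insert_subset hA.2 q3⟩) (by omega)
      rw [hci, ← Nat.sub_sub] at this
      exact this
    have hs2 : #F * ((K + 1) * m) ≤ (∑ A ∈ F, #(A ∩ (b \ x))) * (2 * d - #x) := by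
      rw [Finset.sum_mul, ← smul_eq_mul]
      exact Finset.card_nsmul_le_sum _ _ _ (fun A hA => (hu A hA).1)
    have hpos : 2 * d - #x = (2 * d - #x - 1) + 1 := by omega
    have hch := Nat.add_one_mul_choose_eq (2 * d - #x - 1) K
    rw [← hpos] at hch
    have : #F * ((K + 1) * m) ≤ (2 * d - #x).choose (K + 1) * ((K + 1) * m) := by
      calc #F * ((K + 1) * m) ≤ _ := hs2
        _ ≤ (m * (2 * d - #x - 1).choose K) * (2 * d - #x) := Nat.mul_le_mul_right _ hsum
        _ = m * ((2 * d - #x) * (2 * d - #x - 1).choose K) := by ring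
        _ = m * ((2 * d - #x).choose (K + 1) * (K + 1)) := by rw [hch]
        _ = _ := by ring
    exact Nat.le_of_mul_le_mul_right this (Nat.mul_pos (Nat.succ_pos K) hmpos)

theorem choose18 (d k : ℕ) (hk : k ≤ d) : ∀ t ≤ k,
    (2 * d - t).choose (k - t) * 2 ^ t ≤ (2 * d).choose k := by
  intro t
  induction t with
  | zero => intro _; simp
  | succ t ih =>
    intro ht
    refine le_trans ?_ (ih (by omega))
    have hch := Nat.add_one_mul_choose_eq (2 * d - (t + 1)) (k - (t + 1))
    rw [show 2 * d - (t + 1) + 1 = 2 * d - t by omega,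
      show k - (t + 1) + 1 = k - t by omega] at hch
    rw [pow_succ', ← mul_assoc]
    apply Nat.mul_le_mul_right
    have h0 : 0 < k - t := by omega
    have h1 : 2 * (k - t) ≤ 2 * d - t := by omega
    have := Nat.mul_le_mul_right ((2 * d - (t + 1)).choose (k - (t + 1))) h1
    rw [hch] at this
    apply Nat.le_of_mul_le_mul_right _ h0
    calc _ = _ := by ring
      _ ≤ _ := this

open Finset in
theorem cheb18 {α : Type*} (F : Finset α) (v : α → ℕ) (M : ℝ)
    (hM : (#F : ℝ) * M = ∑ A ∈ F, (v A : ℝ)) : ∀ t : ℕ, (∀ i : ℕ, i < t → (i : ℝ) ≤ M) →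
    (#F : ℝ) * ∏ i ∈ range t, (M - i) ≤ ∑ A ∈ F, ((v A).descFactorial t : ℝ) := by
  intro t
  induction t with
  | zero => intro _; simp
  | succ t ih =>
    intro ht
    rcases F.eq_empty_or_nonempty with rfl | hne
    · simp
    have hN : (0 : ℝ) < #F := by exact_mod_cast hne.card_pos
    have ih' := ih (fun i hi => ht i (by omega))
    have hMt : (0 : ℝ) ≤ M - t := sub_nonneg.2 (ht t (by omega))
    have hmono : MonovaryOn (fun A => ((v A).descFactorial t : ℝ)) (fun A => (v A : ℝ) - t) F := by
      intro A _ B _ h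
      have h' : (v A : ℝ) < v B := by simpa using h
      have h'' : v A ≤ v B := by exact_mod_cast h'.le
      simp only [Nat.cast_le]
      exact Nat.descFactorial_le _ h''
    have hc := hmono.sum_mul_sum_le_card_mul_sum
    have e : ∀ A ∈ F, ((v A).descFactorial t : ℝ) * ((v A : ℝ) - t)
        = ((v A).descFactorial (t + 1) : ℝ) := by
      intro A _
      rw [Nat.descFactorial_succ]
      rcases le_or_gt t (v A) with h | h
      · push_cast [Nat.cast_sub h]; ring
      · rw [Nat.descFactorial_of_lt h]; simp
    rw [Finset.sum_congr rfl e, Finset.sum_sub_distrib, ← hM, Finset.sum_const, nsmul_eq_mul] at hc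
    rw [Finset.prod_range_succ]
    have h5 := mul_le_mul_of_nonneg_right ih' hMt
    apply le_of_mul_le_mul_left _ hN
    calc _ = (#F : ℝ) * (((#F : ℝ) * ∏ i ∈ range t, (M - i)) * (M - t)) := by ring
      _ ≤ (#F : ℝ) * ((∑ A ∈ F, ((v A).descFactorial t : ℝ)) * (M - t)) :=
          mul_le_mul_of_nonneg_left h5 hN.le
      _ = (∑ A ∈ F, ((v A).descFactorial t : ℝ)) * ((#F : ℝ) * M - (#F : ℝ) * t) := by ring
      _ ≤ _ := hc

open Finset in
theorem abs18 (d k : ℕ) (hk : k ≤ d) (P : Set (Finset ℕ))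
    (h1 : ∀ A ∈ P, #A ≤ d) (h2 : ∀ A ∈ P, ∀ B ∈ P, #(symmDiff A B) ≤ d)
    (h3 : ∀ X : Finset ℕ, ∃ B ∈ P, d ≤ #(symmDiff X B))
    (F : Finset (Finset ℕ)) (hF : ∀ A ∈ F, A ∈ P ∧ #A = k) (hne : F.Nonempty)
    (l : ℕ) (hl : 1 ≤ l) (D : ℝ) (hD : 0 ≤ D)
    (hM : (#F : ℝ) * (l / 2 + D) = ∑ A ∈ F, (#(range l ∩ A) : ℝ)) :
    (#F : ℝ) ≤ ((2 * d).choose k : ℝ) * (1 + D / (l : ℝ)) ^ (-D) := by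
  have hN : (0 : ℝ) < #F := by exact_mod_cast hne.card_pos
  have hl0 : (0 : ℝ) < l := by exact_mod_cast hl
  have hDl : D ≤ l / 2 := by
    have : ∑ A ∈ F, (#(range l ∩ A) : ℝ) ≤ ∑ A ∈ F, (l : ℝ) := by
      apply Finset.sum_le_sum
      intro A _
      have := Finset.card_le_card (Finset.inter_subset_left (s₁ := range l) (s₂ := A))
      rw [Finset.card_range] at this
      exact_mod_cast this
    rw [← hM, Finset.sum_const, nsmul_eq_mul] at this
    have := le_of_mul_le_mul_left this hN
    linarith
  set t := ⌈D⌉₊ with htdef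
  have htD : ∀ i : ℕ, i < t → (i : ℝ) < D := fun i hi => Nat.lt_ceil.1 hi
  have hDt : D ≤ t := Nat.le_ceil D
  -- t ≤ k
  have htk : t ≤ k := by
    apply Nat.ceil_le.2
    have : ∑ A ∈ F, (#(range l ∩ A) : ℝ) ≤ ∑ A ∈ F, (k : ℝ) := by
      apply Finset.sum_le_sum
      intro A hA
      have := Finset.card_le_card (Finset.inter_subset_right (s₁ := range l) (s₂ := A))
      rw [(hF A hA).2] at this
      exact_mod_cast this
    rw [← hM, Finset.sum_const, nsmul_eq_mul] at this
    have := le_of_mul_le_mul_left this hN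
    linarith
  have hcheb := cheb18 F (fun A => #(range l ∩ A)) (l / 2 + D) hM t (by
    intro i hi
    have := htD i hi
    linarith)
  have hdc : ∑ A ∈ F, (#(range l ∩ A)).choose t ≤ l.choose t * (2 * d - t).choose (k - t) := by
    have h := Finset.sum_card_bipartiteAbove_eq_sum_card_bipartiteBelow
          (s := F) (t := powersetCard t (range l)) (fun (A T : Finset ℕ) => T ⊆ A)
    simp only [Finset.bipartiteAbove, Finset.bipartiteBelow] at h
    have e : ∑ A ∈ F, (#(range l ∩ A)).choose t
        = ∑ A ∈ F, #((powersetCard t (range l)).filter (fun T => T ⊆ A)) := by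
      apply Finset.sum_congr rfl
      intro A _
      rw [← Finset.card_powersetCard]
      congr 1
      ext T
      simp only [Finset.mem_powersetCard, Finset.mem_filter, Finset.subset_inter_iff]
      tauto
    rw [e, h]
    have hc : l.choose t = #(powersetCard t (range l)) := by simp
    rw [hc, ← smul_eq_mul]
    apply Finset.sum_le_card_nsmul
    intro T hT
    rw [Finset.mem_powersetCard] at hT
    have := core18 d k hk P h1 h2 h3 (k - t) T (F.filter (fun A => T ⊆ A)) (by
      intro A hA
      rw [Finset.mem_filter] at hA
      exact ⟨(hF A hA.1).1, (hF A hA.1).2, hA.2⟩) (by omega)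
    rw [hT.2] at this
    exact this
  have hdc2 : ∑ A ∈ F, ((#(range l ∩ A)).descFactorial t : ℝ)
      ≤ (l.descFactorial t : ℝ) * (2 * d - t).choose (k - t) := by
    have : ∑ A ∈ F, (#(range l ∩ A)).descFactorial t
      ≤ l.descFactorial t * (2 * d - t).choose (k - t) := by
      simp only [Nat.descFactorial_eq_factorial_mul_choose]
      rw [← Finset.mul_sum, mul_assoc]
      exact Nat.mul_le_mul_left _ hdc
    exact_mod_cast this
  have hch : ((2 * d - t).choose (k - t) : ℝ) * 2 ^ t ≤ (2 * d).choose k := by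
    exact_mod_cast choose18 d k hk t htk
  have hil : ∀ i ∈ range t, (0 : ℝ) < (l : ℝ) - i := by
    intro i hi
    have := htD i (Finset.mem_range.1 hi)
    linarith
  have hdf : (l.descFactorial t : ℝ) = ∏ i ∈ range t, ((l : ℝ) - i) := by
    rw [Nat.descFactorial_eq_prod_range, Nat.cast_prod]
    apply Finset.prod_congr rfl
    intro i hi
    have := hil i hi
    rw [Nat.cast_sub]
    have h' : (i : ℝ) < l := by linarith
    exact_mod_cast h'.le
  have hQ : (0 : ℝ) < ∏ i ∈ range t, ((l : ℝ) - i) := Finset.prod_pos hil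
  have hx : 0 ≤ D / (l : ℝ) := by positivity
  have hprod : (1 + D / (l : ℝ)) ^ t * ∏ i ∈ range t, ((l : ℝ) - i)
      ≤ 2 ^ t * ∏ i ∈ range t, ((l : ℝ) / 2 + D - i) := by
    have c1 : (1 + D / (l : ℝ)) ^ t = ∏ i ∈ range t, (1 + D / (l : ℝ)) := by simp
    have c2 : (2 : ℝ) ^ t = ∏ i ∈ range t, (2 : ℝ) := by simp
    rw [c1, c2, ← Finset.prod_mul_distrib, ← Finset.prod_mul_distrib]
    apply Finset.prod_le_prod
    · intro i hi
      have := hil i hi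
      positivity
    · intro i hi
      have hi' := htD i (Finset.mem_range.1 hi)
      have q : D / (l : ℝ) * l = D := by field_simp
      nlinarith [mul_nonneg hx (Nat.cast_nonneg (α := ℝ) i)]
  have hfin : (#F : ℝ) * (1 + D / (l : ℝ)) ^ t ≤ (2 * d).choose k := by
    apply le_of_mul_le_mul_right _ hQ
    calc (#F : ℝ) * (1 + D / (l : ℝ)) ^ t * ∏ i ∈ range t, ((l : ℝ) - i)
        = (#F : ℝ) * ((1 + D / (l : ℝ)) ^ t * ∏ i ∈ range t, ((l : ℝ) - i)) := by ring
      _ ≤ (#F : ℝ) * (2 ^ t * ∏ i ∈ range t, ((l : ℝ) / 2 + D - i)) :=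
          mul_le_mul_of_nonneg_left hprod hN.le
      _ = 2 ^ t * ((#F : ℝ) * ∏ i ∈ range t, ((l : ℝ) / 2 + D - i)) := by ring
      _ ≤ 2 ^ t * ((l.descFactorial t : ℝ) * (2 * d - t).choose (k - t)) :=
          mul_le_mul_of_nonneg_left (hcheb.trans hdc2) (by positivity)
      _ = ((2 * d - t).choose (k - t) * 2 ^ t) * ∏ i ∈ range t, ((l : ℝ) - i) := by
          rw [hdf]; ring
      _ ≤ _ := mul_le_mul_of_nonneg_right hch hQ.le
  have hb : (0 : ℝ) < 1 + D / (l : ℝ) := by positivity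
  rw [Real.rpow_neg hb.le, ← div_eq_mul_inv, le_div_iff₀ (Real.rpow_pos_of_pos hb _)]
  refine le_trans (mul_le_mul_of_nonneg_left ?_ hN.le) hfin
  rw [← Real.rpow_natCast]
  exact Real.rpow_le_rpow_of_exponent_le (by linarith) hDt

/-- The word obtained from `w` by flipping the coordinates in `A`. -/
def wd18 (w : ℕ → Fin 2) (A : Finset ℕ) : ℕ → Fin 2 := fun i => if i ∈ A then w i + 1 else w i

theorem fin2_18 (a b : Fin 2) (h : a ≠ b) : b + 1 = a := by
  revert a b; decide

theorem fin2_18' (a : Fin 2) : a + 1 ≠ a := by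
  revert a; decide

theorem wd18_ne (w : ℕ → Fin 2) (A : Finset ℕ) (i : ℕ) : wd18 w A i ≠ w i ↔ i ∈ A := by
  unfold wd18
  split_ifs with h
  · simp only [h, iff_true]; exact fin2_18' _
  · simp [h]

open Finset in
theorem wd18_dist (w : ℕ → Fin 2) (A B : Finset ℕ) :
    hDist 2 (wd18 w A) (wd18 w B) = (#(symmDiff A B) : ℕ∞) := by
  unfold hDist
  rw [← Set.encard_coe_eq_coe_finsetCard]
  congr 1
  ext i
  simp only [Set.mem_ofPred_eq, Finset.coe_symmDiff, Set.mem_symmDiff, Finset.mem_coe]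
  unfold wd18
  have h1 := fin2_18' (w i)
  by_cases hA : i ∈ A <;> by_cases hB : i ∈ B <;> simp [hA, hB]

theorem alg18 (y s l : ℝ) (hy : 0 < y) : y * (l / 2 + (s / y - l * (1 / 2))) = s := by
  field_simp
  ring

theorem wd18_empty (w : ℕ → Fin 2) : wd18 w ∅ = w := by
  funext i; simp [wd18]

theorem wd18_inj (w : ℕ → Fin 2) : Function.Injective (wd18 w) := by
  intro A B h
  ext i
  rw [← wd18_ne w A i, ← wd18_ne w B i, h]

theorem wd18_surj (w s : ℕ → Fin 2) (d : ℕ) (h : hDist 2 s w ≤ (d : ℕ∞)) :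
    ∃ A, s = wd18 w A := by
  unfold hDist at h
  have hfin : {i | s i ≠ w i}.Finite := Set.finite_of_encard_le_coe h
  refine ⟨hfin.toFinset, ?_⟩
  funext i
  unfold wd18
  simp only [Set.Finite.mem_toFinset, Set.mem_ofPred_eq]
  split_ifs with hi
  · exact (fin2_18 _ _ hi).symm
  · exact not_not.1 hi

theorem hDist18_tri (a b c : ℕ → Fin 2) : hDist 2 a c ≤ hDist 2 a b + hDist 2 b c := by
  unfold hDist
  refine le_trans (Set.encard_le_encard ?_) (Set.encard_union_le _ _)
  intro i hi
  simp only [Set.mem_ofPred_eq, Set.mem_union] at *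
  by_contra hcon
  push Not at hcon
  exact hi (hcon.1.trans hcon.2)

open Finset in
theorem stmt18 (d : ℕ) (hd : 1 ≤ d) (S : Set (ℕ → Fin 2))
    (hmax : IsDMaximal 2 d S) (hball : ¬ ContainsBall 2 S 1)
    (w : ℕ → Fin 2) (hw : w ∈ S) (k : ℕ) (hk : k ≤ d)
    (Sk : Set (ℕ → Fin 2)) (hSk : Sk = {a ∈ S | hDist 2 a w = (k : ℕ∞)})
    (hne : Sk.Nonempty)
    (N : ℕ) (hN : N = Sk.ncard)
    (c : ℕ → ℕ) (hc : ∀ i, c i = {a ∈ Sk | a i ≠ w i}.ncard)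
    (ℓ : ℕ) (hℓ : 1 ≤ ℓ)
    (Δ : ℝ) (hΔ : Δ = ∑ i ∈ Finset.range ℓ, ((c i : ℝ) / (N : ℝ) - 1 / 2))
    (hΔ0 : 0 ≤ Δ) :
    (Sk.ncard : ℝ) ≤ ((2 * d).choose k : ℝ) * (1 + Δ / (ℓ : ℝ)) ^ (-Δ) := by
  obtain ⟨hdiam, -, hmx⟩ := hmax
  by_cases hfin : Sk.Finite
  swap
  · rw [Set.Infinite.ncard hfin, Nat.cast_zero]
    positivity
  have hdw : ∀ A, hDist 2 (wd18 w A) w = (#A : ℕ∞) := by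
    intro A
    have := wd18_dist w A ∅
    rw [wd18_empty] at this
    rw [this, ← Finset.bot_eq_empty, symmDiff_bot]
  have hsurj : ∀ s ∈ S, ∃ A, s = wd18 w A := fun s hs => wd18_surj w s d (hdiam s hs w hw)
  have hGfin : (wd18 w ⁻¹' Sk).Finite := hfin.preimage (wd18_inj w).injOn
  set F := hGfin.toFinset with hFdef
  have hmemF : ∀ A, A ∈ F ↔ wd18 w A ∈ Sk := by
    intro A; simp [hFdef]
  have himg : Sk = wd18 w '' (F : Set (Finset ℕ)) := by
    ext s
    constructor
    · intro hs
      have hs' : s ∈ S := by rw [hSk] at hs; exact hs.1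
      obtain ⟨A, rfl⟩ := hsurj s hs'
      exact ⟨A, by simpa [hmemF] using hs, rfl⟩
    · rintro ⟨A, hA, rfl⟩
      exact (hmemF A).1 (by simpa using hA)
  have hcard : Sk.ncard = #F := by
    conv_lhs => rw [himg]
    rw [Set.ncard_image_of_injective _ (wd18_inj w), Set.ncard_coe_finset]
  have hci : ∀ i, c i = #(F.filter (fun A => i ∈ A)) := by
    intro i
    rw [hc, ← Set.ncard_coe_finset, ← Set.ncard_image_of_injective _ (wd18_inj w)]
    congr 1
    ext s
    constructor
    · rintro ⟨hs, hi⟩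
      rw [himg] at hs
      obtain ⟨A, hA, rfl⟩ := hs
      refine ⟨A, ?_, rfl⟩
      rw [wd18_ne] at hi
      simp only [Finset.coe_filter, Set.mem_ofPred_eq]
      exact ⟨by simpa using hA, hi⟩
    · rintro ⟨A, hA, rfl⟩
      simp only [Finset.coe_filter, Set.mem_ofPred_eq] at hA
      exact ⟨(hmemF A).1 hA.1, (wd18_ne w A i).2 hA.2⟩
  have hFne : F.Nonempty := by
    rw [← Finset.card_pos, ← hcard]
    exact (Set.ncard_pos hfin).2 hne
  rw [hcard]
  have hNpos : (0 : ℝ) < #F := by exact_mod_cast hFne.card_pos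
  refine abs18 d k hk {A | wd18 w A ∈ S} ?_ ?_ ?_ F ?_ hFne ℓ hℓ Δ hΔ0 ?_
  · intro A hA
    have := hdiam _ hA w hw
    rw [hdw] at this
    exact_mod_cast this
  · intro A hA B hB
    have := hdiam _ hA _ hB
    rw [wd18_dist] at this
    exact_mod_cast this
  · intro X
    by_contra hcon
    push Not at hcon
    apply hball
    refine ⟨wd18 w X, ?_⟩
    intro y hy
    apply hmx
    intro s hs
    obtain ⟨B, rfl⟩ := hsurj s hs
    have h1 : hDist 2 y (wd18 w X) ≤ ((1 : ℕ) : ℕ∞) := hy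
    have h2 : #(symmDiff X B) + 1 ≤ d := hcon B hs
    calc hDist 2 y (wd18 w B) ≤ _ := hDist18_tri y (wd18 w X) _
      _ ≤ ((1 : ℕ) : ℕ∞) + (#(symmDiff X B) : ℕ∞) := add_le_add h1 (wd18_dist w X B).le
      _ ≤ (d : ℕ∞) := by
        rw [add_comm]
        exact_mod_cast h2
  · intro A hA
    have := (hmemF A).1 hA
    rw [hSk] at this
    refine ⟨this.1, ?_⟩
    have h2 := this.2
    rw [hdw] at h2
    exact_mod_cast h2
  · have hsum : ∑ i ∈ range ℓ, c i = ∑ A ∈ F, #(range ℓ ∩ A) := by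
      have h := Finset.sum_card_bipartiteAbove_eq_sum_card_bipartiteBelow
          (s := F) (t := range ℓ) (fun (A : Finset ℕ) (i : ℕ) => i ∈ A)
      simp only [Finset.bipartiteAbove, Finset.bipartiteBelow, Finset.filter_mem_eq_inter] at h
      rw [h]
      exact Finset.sum_congr rfl (fun i _ => hci i)
    have hsum' : ∑ i ∈ range ℓ, (c i : ℝ) = ∑ A ∈ F, (#(range ℓ ∩ A) : ℝ) := by
      exact_mod_cast hsum
    rw [← hsum', hΔ, hN, hcard, Finset.sum_sub_distrib, ← Finset.sum_div, Finset.sum_const,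
      Finset.card_range, nsmul_eq_mul]
    exact alg18 _ _ _ hNpos
end

section
/- Let n and d be integers with 1 ≤ d < n. Then every subset S ⊆ {0,1}^n of diameter at most d (i.e., any two elements differ in at most d coordinates) has size |S| ≤ 2^{n·H(d/(2n)) + 1}, where H(x) = −x·log₂(x) − (1−x)·log₂(1−x) is the binary entropy function. -/
/-- The binary entropy function `H(x) = -x·log₂ x - (1-x)·log₂(1-x)`. -/
noncomputable def binEnt (x : ℝ) : ℝ :=
  -x * Real.logb 2 x - (1 - x) * Real.logb 2 (1 - x)


def wSpace (n t : ℕ) : Submodule ℚ ((Fin n → Fin 2) → ℚ) :=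
  Submodule.span ℚ ((fun (A : Finset (Fin n)) => fun (x : Fin n → Fin 2) => ∏ i ∈ A, ((x i : ℕ) : ℚ)) ''
    {A | A.card ≤ t})

lemma wSpace_finrank (n t : ℕ) :
    Module.finrank ℚ (wSpace n t) ≤ ∑ i ∈ Finset.range (t+1), n.choose i := by
  classical
  have h1 : ((Finset.univ.filter (fun A : Finset (Fin n) => A.card ≤ t)).card)
      = ∑ i ∈ Finset.range (t+1), n.choose i := by
    rw [Finset.card_eq_sum_card_fiberwise (f := Finset.card) (t := Finset.range (t+1))]
    · apply Finset.sum_congr rfl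
      intro i hi
      have : (Finset.univ.filter (fun A : Finset (Fin n) => A.card ≤ t)).filter (fun A => A.card = i)
          = Finset.powersetCard i Finset.univ := by
        ext A
        simp [Finset.mem_powersetCard] at hi ⊢
        omega
      rw [this]; simp
    · intro A hA
      simp at hA ⊢; omega
  rw [← h1]
  have h2 : wSpace n t = Submodule.span ℚ
      (((Finset.univ.filter (fun A : Finset (Fin n) => A.card ≤ t)).image (fun (A : Finset (Fin n)) => fun (x : Fin n → Fin 2) => ∏ i ∈ A, ((x i : ℕ) : ℚ)) : Finset _) : Set ((Fin n → Fin 2) → ℚ)) := by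
    simp [wSpace]
  rw [h2]
  exact (finrank_span_finset_le_card _).trans Finset.card_image_le

lemma wSpace_mono {n s t : ℕ} (h : s ≤ t) : wSpace n s ≤ wSpace n t :=
  Submodule.span_mono (Set.image_mono (fun A (hA : A.card ≤ s) => hA.trans h))

lemma wSpace_mul_coord {n t : ℕ} (i : Fin n) (f : (Fin n → Fin 2) → ℚ) (hf : f ∈ wSpace n t) :
    (fun x => ((x i : ℕ) : ℚ)) * f ∈ wSpace n (t+1) := by
  classical
  induction hf using Submodule.span_induction with
  | mem f hf =>
    obtain ⟨A, hA, rfl⟩ := hf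
    apply Submodule.subset_span
    refine ⟨insert i A, (Finset.card_insert_le _ _).trans (Nat.succ_le_succ hA), ?_⟩
    funext x
    simp only [Pi.mul_apply]
    by_cases hi : i ∈ A
    · rw [Finset.insert_eq_of_mem hi, ← Finset.mul_prod_erase _ _ hi, ← mul_assoc]
      congr 1
      generalize x i = y
      fin_cases y <;> simp
    · rw [Finset.prod_insert hi]
  | zero => simp
  | add f g _ _ hf hg => rw [mul_add]; exact add_mem hf hg
  | smul c f _ hf => rw [mul_smul_comm]; exact Submodule.smul_mem _ _ hf

lemma dist_eq {n : ℕ} (b x : Fin n → Fin 2) : (hammingDist x b : ℚ) =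
    ∑ i, (((b i : ℕ) : ℚ) + (1 - 2 * ((b i : ℕ) : ℚ)) * ((x i : ℕ) : ℚ)) := by
  unfold hammingDist
  rw [Finset.card_filter]
  push_cast
  apply Finset.sum_congr rfl
  intro i _
  generalize x i = y
  generalize b i = z
  fin_cases y <;> fin_cases z <;> norm_num

lemma wSpace_mul_dist {n t : ℕ} (b : Fin n → Fin 2) (c : ℚ) (f : (Fin n → Fin 2) → ℚ)
    (hf : f ∈ wSpace n t) :
    (fun x => ((hammingDist x b : ℚ) - c) * f x) ∈ wSpace n (t+1) := by
  have : (fun x => ((hammingDist x b : ℚ) - c) * f x) =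
      (∑ i, (((b i : ℕ) : ℚ) • f + (1 - 2 * ((b i : ℕ) : ℚ)) • ((fun x => ((x i : ℕ) : ℚ)) * f))) - c • f := by
    funext x
    rw [dist_eq]
    simp only [Pi.sub_apply, Finset.sum_apply, Pi.add_apply, Pi.smul_apply, Pi.mul_apply, smul_eq_mul,
      sub_mul, Finset.sum_mul, add_mul, mul_assoc]
  rw [this]
  have hf' := wSpace_mono (Nat.le_succ t) hf
  refine sub_mem (sum_mem fun i _ => add_mem ?_ ?_) ?_
  · exact Submodule.smul_mem _ _ hf'
  · exact Submodule.smul_mem _ _ (wSpace_mul_coord i f hf)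
  · exact Submodule.smul_mem _ _ hf'

def dPoly (n t : ℕ) (b x : Fin n → Fin 2) : ℚ :=
  ∏ i ∈ Finset.range t, ((hammingDist x b : ℚ) - (2 * ((i : ℚ) + 1)))

lemma dPoly_mem (n t : ℕ) (b : Fin n → Fin 2) : dPoly n t b ∈ wSpace n t := by
  induction t with
  | zero =>
    apply Submodule.subset_span
    refine ⟨∅, by simp, ?_⟩
    funext x; simp [dPoly]
  | succ t ih =>
    have := wSpace_mul_dist b (2 * ((t : ℚ) + 1)) _ ih
    convert this using 1
    funext x
    simp only [dPoly]
    rw [Finset.prod_range_succ, mul_comm]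

lemma card_even (n t : ℕ) (S : Finset (Fin n → Fin 2))
    (h : ∀ a ∈ S, ∀ b ∈ S, hammingDist a b ≤ 2 * t + 1 ∧ Even (hammingDist a b)) :
    S.card ≤ ∑ i ∈ Finset.range (t+1), n.choose i := by
  classical
  have hself : ∀ b, dPoly n t b b ≠ 0 := by
    intro b
    simp only [dPoly, hammingDist_self]
    rw [Finset.prod_ne_zero_iff]
    intro i _
    have : (0:ℚ) ≤ i := by positivity
    push_cast
    intro h; linarith
  have hne : ∀ a ∈ S, ∀ b ∈ S, a ≠ b → dPoly n t b a = 0 := by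
    intro a ha b hb hab
    obtain ⟨h1, k, hk⟩ := h a ha b hb
    have h0 : 0 < hammingDist a b := hammingDist_pos.2 hab
    apply Finset.prod_eq_zero (i := k - 1) (by simp; omega)
    have : hammingDist a b = 2 * ((k-1) + 1) := by omega
    rw [this]; push_cast; ring
  have hli : LinearIndependent ℚ (fun b : S => (⟨dPoly n t b, dPoly_mem n t b⟩ : wSpace n t)) := by
    rw [Fintype.linearIndependent_iff]
    intro g hg c
    have h1 := congrArg (fun f : wSpace n t => (f : (Fin n → Fin 2) → ℚ) c) hg
    simp only [Submodule.coe_sum, Submodule.coe_smul, Finset.sum_apply, Pi.smul_apply, smul_eq_mul,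
      Submodule.coe_zero, Pi.zero_apply] at h1
    rw [Finset.sum_eq_single c] at h1
    · exact (mul_eq_zero.1 h1).resolve_right (hself _)
    · intro b _ hb
      rw [hne c c.2 b b.2 (fun h => hb (Subtype.ext h.symm)), mul_zero]
    · simp
  have := hli.fintype_card_le_finrank
  rw [Fintype.card_coe] at this
  exact this.trans (wSpace_finrank n t)

lemma dist_parity {n : ℕ} (a b : Fin n → Fin 2) :
    ((hammingDist a b : ℕ) : ZMod 2) = ∑ i, ((a i : ℕ) : ZMod 2) + ∑ i, ((b i : ℕ) : ZMod 2) := by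
  unfold hammingDist
  rw [Finset.card_filter, ← Finset.sum_add_distrib]
  push_cast
  apply Finset.sum_congr rfl
  intro i _
  generalize a i = y
  generalize b i = z
  revert y z
  decide

lemma card_all (n t : ℕ) (S : Finset (Fin n → Fin 2))
    (h : ∀ a ∈ S, ∀ b ∈ S, hammingDist a b ≤ 2 * t + 1) :
    S.card ≤ 2 * ∑ i ∈ Finset.range (t+1), n.choose i := by
  classical
  let w : (Fin n → Fin 2) → ZMod 2 := fun a => ∑ i, ((a i : ℕ) : ZMod 2)
  rw [← Finset.card_filter_add_card_filter_not (s := S) (fun a => w a = 0), two_mul]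
  have key : ∀ u v : ZMod 2, (u = 0 ∧ v = 0 ∨ ¬ u = 0 ∧ ¬ v = 0) → u + v = 0 := by decide
  apply add_le_add <;> apply card_even <;> intro a ha b hb <;> rw [Finset.mem_filter] at ha hb <;>
    refine ⟨h a ha.1 b hb.1, ?_⟩ <;> rw [← ZMod.natCast_eq_zero_iff_even, dist_parity] <;>
    apply key
  · exact Or.inl ⟨ha.2, hb.2⟩
  · exact Or.inr ⟨ha.2, hb.2⟩

lemma sum_choose_le (n t : ℕ) (p : ℝ) (hp : 0 < p) (hp2 : p ≤ 1 / 2) (ht : (t : ℝ) ≤ p * n) :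
    (∑ i ∈ Finset.range (t+1), (n.choose i : ℝ)) ≤ 2 ^ ((n : ℝ) * binEnt p) := by
  have hq : 0 < 1 - p := by linarith
  have hn : t ≤ n := by
    have : (t : ℝ) ≤ n := by nlinarith [(Nat.cast_nonneg n : (0:ℝ) ≤ n)]
    exact_mod_cast this
  have hl2 : Real.log 2 ≠ 0 := (Real.log_pos (by norm_num)).ne'
  set E : ℝ := n * p * Real.log p + n * (1 - p) * Real.log (1 - p) with hE
  have h1 : (2:ℝ) ^ ((n : ℝ) * binEnt p) = Real.exp (-E) := by
    rw [Real.rpow_def_of_pos (by norm_num), hE]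
    congr 1
    unfold binEnt Real.logb
    field_simp
    ring
  rw [h1, Real.exp_neg, ← one_div, le_div_iff₀ (Real.exp_pos _), Finset.sum_mul]
  have h2 : (p + (1 - p)) ^ n = 1 := by simp
  rw [← h2, add_pow]
  have hsub : Finset.range (t+1) ⊆ Finset.range (n+1) := by
    intro i; simp; omega
  refine le_trans (Finset.sum_le_sum ?_) (Finset.sum_le_sum_of_subset_of_nonneg hsub ?_)
  · intro i hi
    have hit : i ≤ t := by simp at hi; omega
    have hit' : (i : ℝ) ≤ p * n := le_trans (by exact_mod_cast hit) ht
    rw [mul_comm]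
    apply mul_le_mul_of_nonneg_right _ (by positivity)
    rw [← Real.exp_log (pow_pos hp i), ← Real.exp_log (pow_pos hq (n-i)), ← Real.exp_add,
      Real.log_pow, Real.log_pow]
    apply Real.exp_le_exp.2
    rw [Nat.cast_sub (hit.trans hn)]
    have hlog : Real.log p ≤ Real.log (1 - p) := Real.log_le_log hp (by linarith)
    nlinarith [mul_nonneg (sub_nonneg.2 hit') (sub_nonneg.2 hlog)]
  · intros; positivity

theorem stmt19 (n d : ℕ) (hd : 1 ≤ d) (hdn : d < n)
    (S : Set (Fin n → Fin 2))
    (hdiam : ∀ a ∈ S, ∀ b ∈ S, hammingDist a b ≤ d) :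
    (S.ncard : ℝ) ≤ 2 ^ ((n : ℝ) * binEnt ((d : ℝ) / (2 * (n : ℝ))) + 1) := by
  classical
  have hn : (0:ℝ) < n := by exact_mod_cast (by omega : 0 < n)
  have hd' : (0:ℝ) < d := by exact_mod_cast hd
  have hdn' : (d:ℝ) < n := by exact_mod_cast hdn
  have h1 := card_all n (d / 2) S.toFinset (by
    intro a ha b hb
    have := hdiam a (by simpa using ha) b (by simpa using hb)
    omega)
  rw [← Set.ncard_eq_toFinset_card'] at h1
  have h1' : (S.ncard : ℝ) ≤ 2 * ∑ i ∈ Finset.range (d/2+1), (n.choose i : ℝ) := by exact_mod_cast h1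
  have h2 := sum_choose_le n (d / 2) ((d : ℝ) / (2 * (n : ℝ))) (by positivity)
    (by rw [div_le_div_iff₀ (by positivity) (by norm_num)]; linarith)
    (by
      have : (d : ℝ) / (2 * (n : ℝ)) * n = d / 2 := by field_simp
      rw [this]
      exact Nat.cast_div_le)
  rw [Real.rpow_add (by norm_num), Real.rpow_one]
  linarith
end
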